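/- arXiv:1906.00523 — 2 statements merged into one kernel-verified Lean document; each statement's English description precedes it below -/
import Mathlib

section
/- (Proposition A) Let μ > 0 and let (γ₁,γ₂) be a generic μ-admissible pair of closed regular curves in S² with periods l₁, l₂ > 0, parametrized so that |γᵢ'(s)|²(1+κᵢ(s)²) = 4 for i = 1,2, with lifts c₁, c₂ and associated map f_{γ₁,γ₂}. Suppose #(γ₁) = #(γ₂) = 1, i.e. each γᵢ has exactly one crossing. Then there exist (s₁,s₂), (u₁,u₂) ∈ ℝ² with f_{γ₁,γ₂}(u₁,u₂) = −f_{γ₁,γ₂}(s₁,s₂); equivalently, the extrinsic diameter of the image of f_{γ₁,γ₂} in S³ equals π. -/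
noncomputable section

open Matrix

/-- Euclidean 3-space (as triples of reals). -/
abbrev R3 : Type := Fin 3 → ℝ

/-- The Euclidean inner product on ℝ³. -/
def dot3 (a b : R3) : ℝ := a 0 * b 0 + a 1 * b 1 + a 2 * b 2

/-- The Euclidean norm on ℝ³. -/
def norm3 (a : R3) : ℝ := Real.sqrt (dot3 a a)

/-- The cross product on ℝ³. -/
def cross3 (a b : R3) : R3 :=
  ![a 1 * b 2 - a 2 * b 1, a 2 * b 0 - a 0 * b 2, a 0 * b 1 - a 1 * b 0]

/-- The determinant of three vectors in ℝ³. -/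
def det3 (a b c : R3) : ℝ := dot3 a (cross3 b c)

/-- `γ : ℝ → ℝ³` is a regular curve in the unit sphere S²:
it is smooth, takes values in S², and has nowhere-vanishing derivative. -/
structure IsRegularCurve (γ : ℝ → R3) : Prop where
  smooth : ContDiff ℝ (⊤ : ℕ∞) γ
  sphere : ∀ s, dot3 (γ s) (γ s) = 1
  reg : ∀ s, deriv γ s ≠ 0

/-- The geodesic curvature `κ(s) = det(γ, γ', γ'')/|γ'|³` of a curve in S². -/
def kappa (γ : ℝ → R3) (s : ℝ) : ℝ :=
  det3 (γ s) (deriv γ s) (deriv (deriv γ) s) / norm3 (deriv γ s) ^ 3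

/-- The unit normal `n(s) = (γ × γ')/|γ'|` of a curve in S². -/
def unitNormal (γ : ℝ → R3) (s : ℝ) : R3 :=
  (norm3 (deriv γ s))⁻¹ • cross3 (γ s) (deriv γ s)

/-- `γ` is closed of period `l > 0`. -/
def HasPeriod (γ : ℝ → R3) (l : ℝ) : Prop := 0 < l ∧ ∀ s, γ (s + l) = γ s

/-- 2×2 complex matrices. -/
abbrev Mat2 := Matrix (Fin 2) (Fin 2) ℂ

def E1 : Mat2 := !![0, Complex.I; Complex.I, 0]
def E2 : Mat2 := !![0, -1; 1, 0]
def E3 : Mat2 := !![Complex.I, 0; 0, -Complex.I]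

/-- The identification of ℝ³ with su(2) via the orthonormal basis e₁, e₂, e₃. -/
def toSu2 (v : R3) : Mat2 := (v 0 : ℂ) • E1 + (v 1 : ℂ) • E2 + (v 2 : ℂ) • E3

/-- The adjoint action `Ad(a)x = a x a⁻¹`. -/
def AdM (a x : Mat2) : Mat2 := a * x * a⁻¹

/-- `c : ℝ → SU(2)` is a lift of the regular curve `γ` in S²:
it is smooth (entrywise), takes values in SU(2), and satisfies
`Ad(c(s))e₃ = γ(s)` and `Ad(c(s))e₁ = γ'(s)/|γ'(s)|` under `toSu2`. -/
structure IsLift (γ : ℝ → R3) (c : ℝ → Mat2) : Prop where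
  mem : ∀ s, c s ∈ Matrix.specialUnitaryGroup (Fin 2) ℂ
  smooth : ∀ i j, ContDiff ℝ (⊤ : ℕ∞) fun s => c s i j
  ad3 : ∀ s, AdM (c s) E3 = toSu2 (γ s)
  ad1 : ∀ s, AdM (c s) E1 = toSu2 ((norm3 (deriv γ s))⁻¹ • deriv γ s)

/-- The entrywise derivative of a matrix-valued curve. -/
def matDeriv (c : ℝ → Mat2) (s : ℝ) : Mat2 :=
  Matrix.of fun i j => deriv (fun t => c t i j) s

/-- The map `f_{γ₁,γ₂}(s₁,s₂) = c₁(0)⁻¹ c₁(s₁) c₂(s₂)⁻¹ c₂(0)` associated to lifts `c₁, c₂`. -/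
def fmap (c1 c2 : ℝ → Mat2) (s1 s2 : ℝ) : Mat2 :=
  (c1 0)⁻¹ * c1 s1 * (c2 s2)⁻¹ * c2 0

/-- `(γ₁, γ₂)` is an admissible pair. -/
structure IsAdmissiblePair (γ1 γ2 : ℝ → R3) : Prop where
  reg1 : IsRegularCurve γ1
  reg2 : IsRegularCurve γ2
  param1 : ∀ s, norm3 (deriv γ1 s) ^ 2 * (1 + kappa γ1 s ^ 2) = 4
  param2 : ∀ s, norm3 (deriv γ2 s) ^ 2 * (1 + kappa γ2 s ^ 2) = 4
  curv : ∀ s1 s2, kappa γ2 s2 < kappa γ1 s1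

/-- The restriction of `γ` to `[a,b]` is a shell. -/
def IsShell (γ : ℝ → R3) (a b : ℝ) : Prop :=
  a < b ∧ Set.InjOn γ (Set.Ico a b) ∧ γ a = γ b ∧
    LinearIndependent ℝ ![deriv γ a, deriv γ b]

/-- A positive shell: `det(γ(a), γ'(a), γ'(b)) < 0`. -/
def IsPositiveShell (γ : ℝ → R3) (a b : ℝ) : Prop :=
  IsShell γ a b ∧ det3 (γ a) (deriv γ a) (deriv γ b) < 0

/-- A negative shell: `det(γ(a), γ'(a), γ'(b)) > 0`. -/
def IsNegativeShell (γ : ℝ → R3) (a b : ℝ) : Prop :=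
  IsShell γ a b ∧ 0 < det3 (γ a) (deriv γ a) (deriv γ b)

/-- The unit sphere S² in ℝ³. -/
def sphere2 : Set R3 := {x | dot3 x x = 1}

/-- The μ-circle with center `o ∈ S²`. -/
def muCircle (μ : ℝ) (o : R3) : Set R3 :=
  {x | dot3 x x = 1 ∧ dot3 x o = μ / Real.sqrt (1 + μ ^ 2)}

/-- The (open) interior domain of the μ-circle with center `o ∈ S²`. -/
def muDisk (μ : ℝ) (o : R3) : Set R3 :=
  {x | dot3 x x = 1 ∧ μ / Real.sqrt (1 + μ ^ 2) < dot3 x o}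

def normalize3 (v : R3) : R3 := (norm3 v)⁻¹ • v

/-- `Δ` is the interior domain of the shell `γ|_{[a,b]}`: it is a connected component of the
complement of the image of the shell in S², and for each `s ∈ (a,b)` the points obtained by
pushing `γ(s)` slightly in the direction `σ • n(s)` (σ = 1 for a positive shell, σ = -1 for a
negative shell) belong to `Δ`. -/
def IsInteriorDomain (γ : ℝ → R3) (a b σ : ℝ) (Δ : Set R3) : Prop :=
  (∃ p ∈ sphere2 \ γ '' Set.Icc a b,
      Δ = connectedComponentIn (sphere2 \ γ '' Set.Icc a b) p) ∧
    ∀ s ∈ Set.Ioo a b, ∃ ε > 0, ∀ δ ∈ Set.Ioo (0 : ℝ) ε,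
      normalize3 (γ s + (σ * δ) • unitNormal γ s) ∈ Δ

/-- The center `o_t = (μ γ(t) + n(t))/√(1+μ²)` of the tangent μ-circle to `γ` at `γ(t)`
on the normal side. -/
def tangentCenter (μ : ℝ) (γ : ℝ → R3) (t : ℝ) : R3 :=
  (Real.sqrt (1 + μ ^ 2))⁻¹ • (μ • γ t + unitNormal γ t)

/-- The rotation of ℝ³ through angle `θ` about the oriented (unit) axis `o`. -/
def rot3 (o : R3) (θ : ℝ) (x : R3) : R3 :=
  Real.cos θ • x + Real.sin θ • cross3 o x + ((1 - Real.cos θ) * dot3 o x) • o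

/-- A closed regular curve of period `l` is generic: every self-intersection is a
transversal double point. -/
def IsGeneric (γ : ℝ → R3) (l : ℝ) : Prop :=
  ∀ s t : ℝ, γ s = γ t → (¬∃ k : ℤ, s - t = k * l) →
    LinearIndependent ℝ ![deriv γ s, deriv γ t] ∧
      ∀ u : ℝ, γ u = γ s → (∃ k : ℤ, u - s = k * l) ∨ (∃ k : ℤ, u - t = k * l)

/-- The number of crossings (self-intersection points) of a closed curve of period `l`. -/
def crossings (γ : ℝ → R3) (l : ℝ) : ℕ :=
  Set.ncard {p : R3 | ∃ s t : ℝ, γ s = p ∧ γ t = p ∧ ¬∃ k : ℤ, s - t = k * l}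

/-- The spherical (geodesic) distance on S³, identified with SU(2):
`dist(A,B) = arccos(Re trace(A Bᴴ)/2)`, which corresponds to the round distance on the
unit sphere S³ ⊂ ℝ⁴. -/
def distS3 (A B : Mat2) : ℝ := Real.arccos ((Matrix.trace (A * Bᴴ)).re / 2)

/-- The extrinsic diameter of the image of the map `f` associated to the lifts `c₁, c₂`. -/
def extDiam (c1 c2 : ℝ → Mat2) : ℝ :=
  sSup {d : ℝ | ∃ s1 s2 u1 u2 : ℝ, d = distS3 (fmap c1 c2 s1 s2) (fmap c1 c2 u1 u2)}

/-- The parallel curve `γ^θ = (cos θ) γ + (sin θ) n`. -/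
def parallelCurve (γ : ℝ → R3) (θ : ℝ) (s : ℝ) : R3 :=
  Real.cos θ • γ s + Real.sin θ • unitNormal γ s

/-- The arclength-type parameter `s(t) = (1/2)∫₀ᵗ |γ'(u)|√(1+κ(u)²) du`. -/
def arcParam (γ : ℝ → R3) (t : ℝ) : ℝ :=
  (1 / 2) * ∫ u in (0 : ℝ)..t, norm3 (deriv γ u) * Real.sqrt (1 + kappa γ u ^ 2)

section

open Filter Topology Set ComplexConjugate

/-- A nonvanishing function on a retract of the plane has a continuous logarithm. -/
theorem exists_log_of_retract {K : Set (ℝ × ℝ)} {r : ℝ × ℝ → ℝ × ℝ} {f : ℝ × ℝ → ℂ}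
    (hr : Continuous r) (hrK : ∀ x, r x ∈ K) (hf : ContinuousOn f K) (h0 : ∀ x ∈ K, f x ≠ 0) :
    ∃ L : ℝ × ℝ → ℂ, Continuous L ∧ ∀ x, Complex.exp (L x) = f (r x) := by
  have hsc : IsSimplyConnected (univ : Set (ℝ × ℝ)) := by
    have : ContractibleSpace (univ : Set (ℝ × ℝ)) := convex_univ.contractibleSpace ⟨0, mem_univ _⟩
    exact SimplyConnectedSpace.ofContractible _
  obtain ⟨L, hL, hE⟩ := Complex.exists_continuousOn_eqOn_exp_comp hsc isOpen_univ
    (g := f ∘ r) (hf.comp hr.continuousOn fun x _ => hrK x)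
    (by rintro ⟨x, -, hx⟩; exact h0 _ (hrK x) hx)
  exact ⟨L, continuousOn_univ.1 hL, fun x => hE (mem_univ x)⟩

/-- Two continuous logarithms of the same function have the same increments. -/
theorem sub_eq_sub_of_exp_eq {a b : ℝ} (hab : a ≤ b) {f g : ℝ → ℂ}
    (hf : ContinuousOn f (Icc a b)) (hg : ContinuousOn g (Icc a b))
    (h : ∀ x ∈ Icc a b, Complex.exp (f x) = Complex.exp (g x)) :
    f b - f a = g b - g a := by
  have ha : a ∈ Icc a b := left_mem_Icc.2 hab
  have key := Complex.isCoveringMap_exp.eqOn_of_comp_eqOn (s := Icc a b) isPreconnected_Icc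
    (g₁ := f) (g₂ := fun x => g x + (f a - g a)) hf (hg.add continuousOn_const)
    (by
      intro x hx
      apply Subtype.ext
      have e : Complex.exp (f a - g a) = 1 := by
        rw [Complex.exp_sub, h a ha, div_self (Complex.exp_ne_zero _)]
      simp [Complex.exp_add, h x hx, e]) ha (by simp)
  have := key (right_mem_Icc.2 hab)
  simp only at this
  rw [this]; ring

theorem im_mul_log_ratio_pos {h : ℝ} (hh : 0 < h) {w : ℂ} (hw : w.im ≠ 0) {f : ℝ → ℂ}
    (hf : ContinuousOn f (Icc (-h) h))
    (he : ∀ y ∈ Icc (-h) h, Complex.exp (f y) = -((h + w * y) / (h - w * y))) :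
    0 < (f h - f (-h)).im * w.im := by
  have slit : ∀ (v : ℂ) (y : ℝ), v.im ≠ 0 → (h + v * y : ℂ) ∈ Complex.slitPlane := by
    intro v y hv
    rw [Complex.mem_slitPlane_iff]
    by_cases hy : y = 0
    · left; simp [hy, hh]
    · right; simp [hy, hv]
  have hw' : (-w).im ≠ 0 := by simpa using hw
  have key := sub_eq_sub_of_exp_eq (by linarith : -h ≤ h) hf
    (g := fun y : ℝ => Complex.log (h + w * y) - Complex.log (h + (-w) * y) + Real.pi * Complex.I)
    (Continuous.continuousOn (by
      refine Continuous.add (Continuous.sub ?_ ?_) continuous_const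
      · exact Continuous.clog (by fun_prop) fun y => slit w y hw
      · exact Continuous.clog (by fun_prop) fun y => slit (-w) y hw'))
    (by
      intro y hy
      rw [he y hy, Complex.exp_add, Complex.exp_pi_mul_I, Complex.exp_sub,
        Complex.exp_log (Complex.slitPlane_ne_zero (slit w y hw)),
        Complex.exp_log (Complex.slitPlane_ne_zero (slit (-w) y hw'))]
      ring_nf)
  rw [key]
  have e1 : (h + w * ((-h : ℝ) : ℂ) : ℂ) = h + (-w) * h := by push_cast; ring
  have e2 : (h + (-w) * ((-h : ℝ) : ℂ) : ℂ) = h + w * h := by push_cast; ring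
  simp only [e1, e2]
  have e3 : ((Complex.log (h + w * h) - Complex.log (h + (-w) * h) + Real.pi * Complex.I) -
      (Complex.log (h + (-w) * h) - Complex.log (h + w * h) + Real.pi * Complex.I)).im =
      2 * ((h + w * h : ℂ).arg - (h + (-w) * h : ℂ).arg) := by
    simp [Complex.log_im]; ring
  rw [e3]
  have i1 : (h + w * h : ℂ).im = w.im * h := by simp
  have i2 : (h + (-w) * h : ℂ).im = -(w.im * h) := by simp
  rcases lt_or_gt_of_ne hw with hneg | hpos
  · have : (h + w * h : ℂ).arg < 0 := by
      rw [Complex.arg_neg_iff, i1]; exact mul_neg_of_neg_of_pos hneg hh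
    have : 0 ≤ (h + (-w) * h : ℂ).arg := by
      rw [Complex.arg_nonneg_iff, i2]; nlinarith
    nlinarith
  · have : 0 ≤ (h + w * h : ℂ).arg := by
      rw [Complex.arg_nonneg_iff, i1]; positivity
    have : (h + (-w) * h : ℂ).arg < 0 := by
      rw [Complex.arg_neg_iff, i2]; nlinarith
    nlinarith

/-- The real-linear map `(x, y) ↦ P x + R y`. -/
def lin2 (P R : ℂ) (x : ℝ × ℝ) : ℂ := P * x.1 + R * x.2

theorem continuous_lin2 (P R : ℂ) : Continuous (lin2 P R) := by
  unfold lin2; fun_prop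

theorem lin2_ne_zero {P R : ℂ} (h : (conj P * R).im ≠ 0) {x : ℝ × ℝ} (hx : x ≠ 0) :
    lin2 P R x ≠ 0 := by
  intro h0
  apply hx
  have h1 := congrArg Complex.re h0
  have h2 := congrArg Complex.im h0
  simp [lin2] at h1 h2 h
  have e1 : (P.re * R.im - P.im * R.re) * x.1 = 0 := by linear_combination R.im * h1 - R.re * h2
  have e2 : (P.re * R.im - P.im * R.re) * x.2 = 0 := by linear_combination P.re * h2 - P.im * h1
  have h' : P.re * R.im - P.im * R.re ≠ 0 := by intro hh; apply h; linarith
  exact Prod.ext ((mul_eq_zero.1 e1).resolve_left h') ((mul_eq_zero.1 e2).resolve_left h')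

/-- A doubly periodic function on the plane cannot have, up to periods, a single zero
at which it is asymptotic to an invertible linear map. -/
theorem doublyPeriodic_no_simple_zero {h : ℝ} (hh : 0 < h) {k : ℝ × ℝ → ℂ} (hk : Continuous k)
    (hk1 : ∀ y, k (-h, y) = k (h, y)) (hk2 : ∀ x, k (x, -h) = k (x, h))
    (hz : ∀ x ∈ Icc (-h) h, ∀ y ∈ Icc (-h) h, k (x, y) = 0 → x = 0 ∧ y = 0)
    {P R m : ℂ} (hPR : (conj P * R).im ≠ 0) (hm : m ≠ 0)
    (hlim : Tendsto (fun x => k x / lin2 P R x) (𝓝[≠] 0) (𝓝 m)) : False := by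
  classical
  set N : ℝ × ℝ → ℂ := Function.update (fun x => k x / lin2 P R x) 0 m with hN
  have hNc : Continuous N := by
    rw [continuous_iff_continuousAt]
    intro x
    by_cases hx : x = 0
    · subst hx; rw [hN, continuousAt_update_same]; exact hlim
    · rw [hN, continuousAt_update_of_ne hx]
      exact hk.continuousAt.div (continuous_lin2 P R).continuousAt (lin2_ne_zero hPR hx)
  have hNe : ∀ x, x ≠ 0 → N x = k x / lin2 P R x := fun x hx => Function.update_of_ne hx _ _
  have hhh : -h ≤ h := by linarith
  have hN0 : ∀ x ∈ Icc (-h) h ×ˢ Icc (-h) h, N x ≠ 0 := by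
    rintro ⟨x, y⟩ ⟨hx, hy⟩
    by_cases h0 : (x, y) = (0 : ℝ × ℝ)
    · rw [h0, hN, Function.update_self]; exact hm
    · rw [hNe _ h0]
      refine div_ne_zero (fun hk0 => h0 ?_) (lin2_ne_zero hPR h0)
      obtain ⟨rfl, rfl⟩ := hz x hx y hy hk0
      rfl
  obtain ⟨L, hL, hE⟩ := exists_log_of_retract (K := Icc (-h) h ×ˢ Icc (-h) h)
    (r := fun x => ((projIcc (-h) h hhh x.1 : ℝ), (projIcc (-h) h hhh x.2 : ℝ)))
    (by fun_prop) (fun x => ⟨Subtype.coe_prop _, Subtype.coe_prop _⟩) hNc.continuousOn hN0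
  have hE' : ∀ x ∈ Icc (-h) h, ∀ y ∈ Icc (-h) h, Complex.exp (L (x, y)) = N (x, y) := by
    intro x hx y hy
    rw [hE]
    simp only [projIcc_of_mem hhh hx, projIcc_of_mem hhh hy]
  have hP : P ≠ 0 := by rintro rfl; simp at hPR
  have hR : R ≠ 0 := by rintro rfl; simp at hPR
  have mh : h ∈ Icc (-h) h := ⟨hhh, le_rfl⟩
  have mh' : -h ∈ Icc (-h) h := ⟨le_rfl, hhh⟩
  have him : (R / P).im * (P / R).im < 0 := by
    have : P / R = (R / P)⁻¹ := by rw [inv_div]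
    rw [this, Complex.inv_im]
    have h1 : (R / P).im ≠ 0 := by
      intro h0
      apply hPR
      have : conj P * R = Complex.normSq P * (R / P) := by
        rw [Complex.normSq_eq_conj_mul_self]; field_simp
      rw [this, Complex.im_ofReal_mul, h0, mul_zero]
    have h2 : 0 < Complex.normSq (R / P) := Complex.normSq_pos.2 (div_ne_zero hR hP)
    have : (R / P).im * (-(R / P).im / Complex.normSq (R / P)) =
      -((R / P).im ^ 2 / Complex.normSq (R / P)) := by ring
    rw [this]
    have := sq_pos_of_ne_zero h1
    simp only [Left.neg_neg_iff]; positivity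
  have hRP : (R / P).im ≠ 0 := by rintro h0; simp [h0] at him
  have hPR' : (P / R).im ≠ 0 := by rintro h0; simp [h0] at him
  have hne : ∀ y : ℝ, ((h, y) : ℝ × ℝ) ≠ 0 ∧ ((-h, y) : ℝ × ℝ) ≠ 0 ∧ ((y, h) : ℝ × ℝ) ≠ 0 ∧
      ((y, -h) : ℝ × ℝ) ≠ 0 := by
    intro y
    refine ⟨?_, ?_, ?_, ?_⟩ <;> simp [Prod.ext_iff, hh.ne']
  have k1 : ∀ y ∈ Icc (-h) h, k (h, y) ≠ 0 := fun y hy h0 => hh.ne' (hz h mh y hy h0).1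
  have k2 : ∀ y ∈ Icc (-h) h, k (y, h) ≠ 0 := fun y hy h0 => hh.ne' (hz y hy h mh h0).2
  have A1 := im_mul_log_ratio_pos hh hRP (f := fun y => L (-h, y) - L (h, y)) (by fun_prop) (by
    intro y hy
    have n1 := lin2_ne_zero hPR (hne y).1
    have n2 := lin2_ne_zero hPR (hne y).2.1
    rw [Complex.exp_sub, hE' _ mh' _ hy, hE' _ mh _ hy, hNe _ (hne y).1, hNe _ (hne y).2.1, hk1]
    have n3 := k1 y hy
    have e : (h : ℂ) - R / P * y = -(lin2 P R (-h, y)) / P := by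
      simp only [lin2]; field_simp; push_cast; ring
    have e' : (h : ℂ) + R / P * y = (lin2 P R (h, y)) / P := by
      simp only [lin2]; field_simp
    rw [e, e']; field_simp)
  have A2 := im_mul_log_ratio_pos hh hPR' (f := fun x => L (x, -h) - L (x, h)) (by fun_prop) (by
    intro y hy
    have n1 := lin2_ne_zero hPR (hne y).2.2.1
    have n2 := lin2_ne_zero hPR (hne y).2.2.2
    rw [Complex.exp_sub, hE' _ hy _ mh', hE' _ hy _ mh, hNe _ (hne y).2.2.1, hNe _ (hne y).2.2.2,
      hk2]
    have n3 := k2 y hy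
    have e : (h : ℂ) - P / R * y = -(lin2 P R (y, -h)) / R := by
      simp only [lin2]; field_simp; push_cast; ring
    have e' : (h : ℂ) + P / R * y = (lin2 P R (y, h)) / R := by
      simp only [lin2]; field_simp; ring
    rw [e, e']; field_simp)
  have e : (L (-h, h) - L (h, h) - (L (-h, -h) - L (h, -h))) =
    (L (h, -h) - L (h, h) - (L (-h, -h) - L (-h, h))) := by ring
  simp only [e] at A1
  nlinarith [mul_pos A1 A2, sq_nonneg (L (h, -h) - L (h, h) - (L (-h, -h) - L (-h, h))).im]

theorem tendsto_div_lin2 {f : ℝ × ℝ → ℂ} {f' : ℝ × ℝ →L[ℝ] ℂ} {x₀ : ℝ × ℝ} {P R : ℂ}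
    (hf : HasFDerivAt f f' x₀) (hf' : ∀ v, f' v = lin2 P R v) (h0 : f x₀ = 0)
    (hPR : (conj P * R).im ≠ 0) :
    Tendsto (fun x => f x / lin2 P R (x - x₀)) (𝓝[≠] x₀) (𝓝 1) := by
  have hker : LinearMap.ker (f' : ℝ × ℝ →ₗ[ℝ] ℂ) = ⊥ := by
    rw [LinearMap.ker_eq_bot']
    intro v hv
    by_contra hne
    exact lin2_ne_zero hPR hne ((hf' v).symm.trans hv)
  obtain ⟨C, -, hC⟩ := LinearMap.exists_antilipschitzWith _ hker
  have hO : (fun x => x - x₀) =O[𝓝 x₀] fun x => lin2 P R (x - x₀) := by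
    refine Asymptotics.IsBigO.of_bound C (Eventually.of_forall fun x => ?_)
    rw [← hf']
    exact ZeroHomClass.bound_of_antilipschitz (f' : ℝ × ℝ →ₗ[ℝ] ℂ) hC (x - x₀)
  have h1 := hf.isLittleO
  simp only [h0, sub_zero, hf'] at h1
  have h2 := (h1.trans_isBigO hO).tendsto_div_nhds_zero.mono_left
    (nhdsWithin_le_nhds (s := {x₀}ᶜ))
  have h3 := h2.add_const 1
  rw [zero_add] at h3
  refine h3.congr' ?_
  filter_upwards [self_mem_nhdsWithin] with x hx
  have := lin2_ne_zero hPR (sub_ne_zero.2 hx)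
  field_simp
  ring

/-- The first column `(p, q)` of a curve in `SU(2)` lifting a regular spherical curve. -/
structure IsSpinor (p q : ℝ → ℂ) (k : ℝ → ℝ) : Prop where
  contDiff_fst : ContDiff ℝ 1 p
  contDiff_snd : ContDiff ℝ 1 q
  unit : ∀ s, conj (p s) * p s + conj (q s) * q s = 1
  speed : ∀ s, p s * deriv q s - q s * deriv p s = k s
  pos : ∀ s, 0 < k s

/-- The upper left entry of `c(s)⁻¹ c(u)`. -/
def relDiag (p q : ℝ → ℂ) (s u : ℝ) : ℂ := conj (p s) * p u + conj (q s) * q u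

/-- The lower left entry of `c(s)⁻¹ c(u)`. -/
def relOff (p q : ℝ → ℂ) (s u : ℝ) : ℂ := p s * q u - q s * p u

theorem relDiag_swap (p q : ℝ → ℂ) (s u : ℝ) : relDiag p q u s = conj (relDiag p q s u) := by
  simp [relDiag]; ring

theorem relOff_swap (p q : ℝ → ℂ) (s u : ℝ) : relOff p q u s = -relOff p q s u := by
  simp [relOff]; ring

namespace IsSpinor

variable {p q : ℝ → ℂ} {k : ℝ → ℝ}

theorem rel_unit (h : IsSpinor p q k) (s u : ℝ) :
    conj (relDiag p q s u) * relDiag p q s u + conj (relOff p q s u) * relOff p q s u = 1 := by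
  have h1 := h.unit s
  have h2 := h.unit u
  simp only [relDiag, relOff, map_add, map_sub, map_mul, Complex.conj_conj]
  linear_combination (conj (p u) * p u + conj (q u) * q u) * h1 + h2

theorem relDiag_self (h : IsSpinor p q k) (s : ℝ) : relDiag p q s s = 1 := h.unit s

theorem relOff_self (s : ℝ) : relOff p q s s = 0 := by simp [relOff]; ring

theorem fst_eq (h : IsSpinor p q k) {a b : ℝ} (h0 : relOff p q a b = 0) :
    p b = p a * relDiag p q a b := by
  have h1 := h.unit a
  simp only [relDiag, relOff] at *
  linear_combination (-p b) * h1 - conj (q a) * h0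

theorem snd_eq (h : IsSpinor p q k) {a b : ℝ} (h0 : relOff p q a b = 0) :
    q b = q a * relDiag p q a b := by
  have h1 := h.unit a
  simp only [relDiag, relOff] at *
  linear_combination (-q b) * h1 + conj (p a) * h0

theorem hasFDerivAt_relOff (h : IsSpinor p q k) {a b : ℝ} (h0 : relOff p q a b = 0) :
    ∃ f' : ℝ × ℝ →L[ℝ] ℂ, HasFDerivAt (fun x : ℝ × ℝ => relOff p q x.1 x.2) f' (a, b) ∧
      ∀ v, f' v = lin2 (-(k a * relDiag p q a b)) (k b * conj (relDiag p q a b)) v := by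
  have hp : ∀ s, HasDerivAt p (deriv p s) s := fun s =>
    (h.contDiff_fst.differentiable one_ne_zero s).hasDerivAt
  have hq : ∀ s, HasDerivAt q (deriv q s) s := fun s =>
    (h.contDiff_snd.differentiable one_ne_zero s).hasDerivAt
  have p1 := (hp a).hasFDerivAt.comp (a, b) (hasFDerivAt_fst (𝕜 := ℝ) (E := ℝ) (F := ℝ))
  have q1 := (hq a).hasFDerivAt.comp (a, b) (hasFDerivAt_fst (𝕜 := ℝ) (E := ℝ) (F := ℝ))
  have p2 := (hp b).hasFDerivAt.comp (a, b) (hasFDerivAt_snd (𝕜 := ℝ) (E := ℝ) (F := ℝ))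
  have q2 := (hq b).hasFDerivAt.comp (a, b) (hasFDerivAt_snd (𝕜 := ℝ) (E := ℝ) (F := ℝ))
  refine ⟨_, (p1.mul q2).sub (q1.mul p2), fun v => ?_⟩
  have e1 := h.fst_eq h0
  have e2 := h.snd_eq h0
  have h0' : relOff p q b a = 0 := by rw [relOff_swap, h0, neg_zero]
  have e3 := h.fst_eq h0'
  have e4 := h.snd_eq h0'
  rw [relDiag_swap] at e3 e4
  have s1 := h.speed a
  have s2 := h.speed b
  simp only [lin2, Function.comp, _root_.sub_apply, _root_.add_apply,
    _root_.smul_apply, ContinuousLinearMap.comp_apply,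
    ContinuousLinearMap.coe_fst', ContinuousLinearMap.coe_snd', smul_eq_mul,
    ContinuousLinearMap.toSpanSingleton_apply, Complex.real_smul]
  rw [← s1, ← s2]
  linear_combination (deriv q b * v.2) * e3 + (-deriv p b * v.2) * e4 +
    deriv p a * v.1 * e2 - deriv q a * v.1 * e1

theorem continuous_relOff (h : IsSpinor p q k) :
    Continuous fun x : ℝ × ℝ => relOff p q x.1 x.2 := by
  have := h.contDiff_fst.continuous
  have := h.contDiff_snd.continuous
  unfold relOff; fun_prop

theorem exists_relOff_quotient (h : IsSpinor p q k) :
    ∃ Q : ℝ × ℝ → ℂ, Continuous Q ∧ (∀ s, Q (s, s) = k s) ∧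
      ∀ s u, relOff p q s u = (u - s) * Q (s, u) := by
  have cp := h.contDiff_fst.continuous
  have cq := h.contDiff_snd.continuous
  have cp' : Continuous (deriv p) := h.contDiff_fst.continuous_deriv le_rfl
  have cq' : Continuous (deriv q) := h.contDiff_snd.continuous_deriv le_rfl
  refine ⟨fun x => ∫ t in (0 : ℝ)..1, (p x.1 * deriv q (x.1 + t * (x.2 - x.1)) -
    q x.1 * deriv p (x.1 + t * (x.2 - x.1))), ?_, ?_, ?_⟩
  · apply intervalIntegral.continuous_parametric_intervalIntegral_of_continuous'
    simp only [Function.uncurry_def]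
    fun_prop
  · intro s
    simp [h.speed]
  · intro s u
    have hd : ∀ t : ℝ, HasDerivAt (fun t : ℝ => relOff p q s (s + t * (u - s)))
        ((u - s) * (p s * deriv q (s + t * (u - s)) - q s * deriv p (s + t * (u - s)))) t := by
      intro t
      have hl : HasDerivAt (fun t : ℝ => s + t * (u - s)) (u - s) t := by
        simpa using ((hasDerivAt_id t).mul_const (u - s)).const_add s
      have hp := ((h.contDiff_fst.differentiable one_ne_zero _).hasDerivAt).scomp t hl
      have hq := ((h.contDiff_snd.differentiable one_ne_zero _).hasDerivAt).scomp t hl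
      refine ((hq.const_mul (p s)).sub (hp.const_mul (q s))).congr_deriv ?_
      simp only [Complex.real_smul]
      push_cast
      ring
    have := intervalIntegral.integral_eq_sub_of_hasDerivAt (a := 0) (b := 1) (fun t _ => hd t)
      (Continuous.intervalIntegrable (by fun_prop) _ _)
    rw [intervalIntegral.integral_const_mul] at this
    rw [this]
    simp [relOff_self]

/-- For a simple arc closing up at a corner, the relative frame of the end points has negative
real part. -/
theorem relDiag_re_neg (h : IsSpinor p q k) {a b : ℝ} (hab : a < b)
    (hinj : ∀ s u, a ≤ s → s < u → u ≤ b → relOff p q s u = 0 → s = a ∧ u = b)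
    (h0 : relOff p q a b = 0) (him : (relDiag p q a b ^ 2).im ≠ 0) :
    (relDiag p q a b).re < 0 := by
  classical
  set α := relDiag p q a b with hα
  have hre : α.re ≠ 0 := by
    intro hr; apply him; simp [pow_two, hr]
  by_contra hneg
  have hpos : 0 < α.re := lt_of_le_of_ne (not_lt.1 hneg) (Ne.symm hre)
  obtain ⟨Q, hQ, hQd, hQr⟩ := h.exists_relOff_quotient
  obtain ⟨f', hf, hf'⟩ := h.hasFDerivAt_relOff h0
  set P : ℂ := -(k a * α) with hP
  set R : ℂ := k b * conj α with hR
  have ka := h.pos a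
  have kb := h.pos b
  have hPR : (conj P * R).im ≠ 0 := by
    have : conj P * R = ((-(k a * k b) : ℝ) : ℂ) * conj (α ^ 2) := by
      simp [hP, hR]; ring
    rw [this, Complex.im_ofReal_mul, Complex.conj_im]
    exact mul_ne_zero (neg_ne_zero.2 (mul_pos ka kb).ne') (neg_ne_zero.2 him)
  have hba : (b : ℂ) - a ≠ 0 := by
    rw [← Complex.ofReal_sub]; exact_mod_cast (sub_pos.2 hab).ne'
  have hlim := tendsto_div_lin2 hf hf' h0 hPR
  set x₀ : ℝ × ℝ := (a, b) with hx₀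
  set N : ℝ × ℝ → ℂ := Function.update (fun x => Q x / lin2 P R (x - x₀)) x₀ (1 / (b - a))
    with hN
  have hNc : Continuous N := by
    rw [continuous_iff_continuousAt]
    intro x
    by_cases hx : x = x₀
    · rw [hx, hN, continuousAt_update_same]
      have hsub : Tendsto (fun x : ℝ × ℝ => ((x.2 : ℂ) - x.1)) (𝓝[≠] x₀) (𝓝 (b - a)) :=
        (Continuous.tendsto (f := fun x : ℝ × ℝ => ((x.2 : ℂ) - x.1)) (by fun_prop) x₀).mono_left
          nhdsWithin_le_nhds
      refine (hlim.div hsub hba).congr' ?_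
      filter_upwards [hsub.eventually_ne hba] with x hx
      simp only [Pi.div_apply, hQr]
      field_simp
    · rw [hN, continuousAt_update_of_ne hx]
      exact hQ.continuousAt.div ((continuous_lin2 P R).comp (by fun_prop)).continuousAt
        (lin2_ne_zero hPR (sub_ne_zero.2 hx))
  have hNe : ∀ x, x ≠ x₀ → N x = Q x / lin2 P R (x - x₀) := fun x hx =>
    Function.update_of_ne hx _ _
  set K : Set (ℝ × ℝ) := {x | a ≤ x.1 ∧ x.1 ≤ x.2 ∧ x.2 ≤ b} with hK
  have hN0 : ∀ x ∈ K, N x ≠ 0 := by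
    rintro ⟨s, u⟩ ⟨h1, h2, h3⟩
    by_cases hx : (s, u) = x₀
    · rw [hx, hN, Function.update_self]; exact one_div_ne_zero hba
    · rw [hNe _ hx]
      refine div_ne_zero (fun hq => hx ?_) (lin2_ne_zero hPR (sub_ne_zero.2 hx))
      rcases eq_or_lt_of_le h2 with h2 | h2
      · simp only at h2
        subst h2
        rw [hQd] at hq
        exact absurd (Complex.ofReal_eq_zero.1 hq) (h.pos s).ne'
      · obtain ⟨rfl, rfl⟩ := hinj s u h1 h2 h3 (by rw [hQr, hq, mul_zero])
        rfl
  obtain ⟨L, hL, hE⟩ := exists_log_of_retract (K := K)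
    (r := fun x => ((projIcc a b hab.le x.1 : ℝ),
      max (projIcc a b hab.le x.1 : ℝ) (projIcc a b hab.le x.2 : ℝ)))
    (by fun_prop) (fun x => ⟨(projIcc a b hab.le x.1).2.1, le_max_left _ _,
      max_le (projIcc a b hab.le x.1).2.2 (projIcc a b hab.le x.2).2.2⟩) hNc.continuousOn hN0
  have hE' : ∀ s u, a ≤ s → s ≤ u → u ≤ b → Complex.exp (L (s, u)) = N (s, u) := by
    intro s u h1 h2 h3
    rw [hE]
    simp only [projIcc_of_mem hab.le (show s ∈ Icc a b from ⟨h1, h2.trans h3⟩),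
      projIcc_of_mem hab.le (show u ∈ Icc a b from ⟨h1.trans h2, h3⟩), max_eq_right h2]
  have hα0 : α ≠ 0 := by rintro h; simp [h] at hpos
  have hcα0 : conj α ≠ 0 := by simpa using hα0
  have kaC : (k a : ℂ) ≠ 0 := by exact_mod_cast ka.ne'
  have kbC : (k b : ℂ) ≠ 0 := by exact_mod_cast kb.ne'
  set ρ : ℂ := -(conj α * k b / k a) with hρ
  have hρ0 : ρ ≠ 0 := neg_ne_zero.2 (div_ne_zero (mul_ne_zero hcα0 kbC) kaC)
  have hedge : EqOn (fun s => N (s, b)) (fun s => N (a, s) * ρ) (Icc a b) := by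
    rw [← closure_Ioo hab.ne]
    refine EqOn.closure ?_ (by fun_prop) (by fun_prop)
    intro s hs
    have n1 : (s, b) ≠ x₀ := fun e => hs.1.ne' (congrArg Prod.fst e)
    have n2 : (a, s) ≠ x₀ := fun e => hs.2.ne (congrArg Prod.snd e)
    simp only
    rw [hNe _ n1, hNe _ n2]
    have r1 := hQr s b
    have r2 := hQr a s
    have r3 : relOff p q s b = -(α * relOff p q a s) := by
      have e1 := h.fst_eq h0
      have e2 := h.snd_eq h0
      simp only [relOff] at *
      rw [e1, e2]; ring
    have c1 : (b : ℂ) - s ≠ 0 := by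
      rw [← Complex.ofReal_sub]; exact_mod_cast (sub_pos.2 hs.2).ne'
    have c2 : (s : ℂ) - a ≠ 0 := by
      rw [← Complex.ofReal_sub]; exact_mod_cast (sub_pos.2 hs.1).ne'
    have c3 : (s : ℂ) - b ≠ 0 := by rw [← neg_sub]; exact neg_ne_zero.2 c1
    have q1 : Q (s, b) = -(α * ((s - a) * Q (a, s))) / (b - s) := by
      rw [eq_div_iff c1, ← r2, ← r3, r1]; ring
    have l1 : lin2 P R ((s, b) - x₀) = -(k a * α) * (s - a) := by simp [lin2, hx₀, hP]
    have l2 : lin2 P R ((a, s) - x₀) = k b * conj α * (s - b) := by simp [lin2, hx₀, hR]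
    rw [l1, l2, q1, hρ]
    field_simp
    ring
  have hedge' := sub_eq_sub_of_exp_eq hab.le (f := fun s => L (s, b))
    (g := fun s => L (a, s) + Complex.log ρ) (by fun_prop) (by fun_prop) (by
      intro s hs
      rw [Complex.exp_add, Complex.exp_log hρ0, hE' _ _ hs.1 hs.2 le_rfl,
        hE' _ _ le_rfl hs.1 hs.2]
      exact hedge hs)
  have hcorner : Complex.exp (L (a, b) - L (a, a)) = ρ := by
    rw [Complex.exp_sub, hE' _ _ le_rfl hab.le le_rfl, hE' _ _ le_rfl le_rfl hab.le,
      show N (a, b) = N (a, a) * ρ from hedge (left_mem_Icc.2 hab.le)]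
    exact mul_div_cancel_left₀ _ (hN0 _ ⟨le_rfl, le_rfl, hab.le⟩)
  have hlinre : ∀ s ∈ Icc a b, 0 < (-lin2 P R ((s, s) - x₀)).re := by
    intro s hs
    have : (-lin2 P R ((s, s) - x₀)).re = (k a * (s - a) + k b * (b - s)) * α.re := by
      simp [lin2, hx₀, hP, hR]; ring
    rw [this]
    refine mul_pos ?_ hpos
    rcases eq_or_lt_of_le hs.1 with h1 | h1
    · rw [← h1]; nlinarith [mul_pos kb (sub_pos.2 hab)]
    · nlinarith [mul_pos ka (sub_pos.2 h1), mul_nonneg kb.le (sub_nonneg.2 hs.2)]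
  have hdiag := sub_eq_sub_of_exp_eq hab.le (f := fun s => L (s, s))
    (g := fun s => Complex.log (Q (s, s)) - Complex.log (-lin2 P R ((s, s) - x₀)) +
      Real.pi * Complex.I) (by fun_prop)
    (by
      refine ContinuousOn.add (ContinuousOn.sub ?_ ?_) continuousOn_const
      · refine ContinuousOn.clog (by fun_prop) fun s _ => Or.inl ?_
        rw [hQd]; exact_mod_cast h.pos s
      · refine ContinuousOn.clog ?_ fun s hs => Or.inl (hlinre s hs)
        exact (((continuous_lin2 P R).comp (by fun_prop)).neg).continuousOn) (by
      intro s hs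
      have n : (s, s) ≠ x₀ := by
        intro e
        have e1 := congrArg Prod.fst e
        have e2 := congrArg Prod.snd e
        simp only [hx₀] at e1 e2
        linarith
      have n1 : Q (s, s) ≠ 0 := by rw [hQd]; exact_mod_cast (h.pos s).ne'
      have n2 : -lin2 P R ((s, s) - x₀) ≠ 0 := by
        intro e; have := hlinre s hs; rw [e] at this; simp at this
      rw [hE' _ _ hs.1 le_rfl hs.2, hNe _ n, Complex.exp_add, Complex.exp_sub,
        Complex.exp_pi_mul_I, Complex.exp_log n1, Complex.exp_log n2]
      rw [div_neg]; ring)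
  have hhalf : (L (a, b) - L (a, a)).im =
      ((-lin2 P R ((a, a) - x₀)).arg - (-lin2 P R ((b, b) - x₀)).arg) / 2 := by
    have e : L (a, b) - L (a, a) = (L (b, b) - L (a, a)) / 2 := by linear_combination -hedge' / 2
    have e2 := congrArg Complex.im hdiag
    simp only [hQd, Complex.sub_im, Complex.add_im, Complex.log_im,
      Complex.arg_ofReal_of_nonneg ka.le, Complex.arg_ofReal_of_nonneg kb.le] at e2
    have e3 := congrArg Complex.im e
    rw [show ((L (b, b) - L (a, a)) / 2).im = ((L (b, b)).im - (L (a, a)).im) / 2 by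
      rw [Complex.div_ofNat_im, Complex.sub_im]] at e3
    rw [e3, e2]; ring
  have b1 := Complex.abs_arg_lt_pi_div_two_iff.2 (Or.inl (hlinre a (left_mem_Icc.2 hab.le)))
  have b2 := Complex.abs_arg_lt_pi_div_two_iff.2 (Or.inl (hlinre b (right_mem_Icc.2 hab.le)))
  rw [abs_lt] at b1 b2
  have hcos : 0 < Real.cos (L (a, b) - L (a, a)).im :=
    Real.cos_pos_of_mem_Ioo ⟨by rw [hhalf]; linarith, by rw [hhalf]; linarith⟩
  have hρre : ρ.re = -(α.re * k b / k a) := by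
    rw [hρ]
    rw [show conj α * k b / k a = ((k b / k a : ℝ) : ℂ) * conj α by push_cast; ring]
    rw [Complex.neg_re, Complex.re_ofReal_mul, Complex.conj_re]; ring
  have hc := congrArg Complex.re hcorner
  rw [Complex.exp_re, hρre] at hc
  have : 0 < α.re * k b / k a := by positivity
  have := mul_pos (Real.exp_pos (L (a, b) - L (a, a)).re) hcos
  linarith

end IsSpinor

/-- The Euclidean norm on `ℂ × ℝ`. -/
def pairNorm (ζ : ℂ) (z : ℝ) : ℝ := √(z ^ 2 + Complex.normSq ζ)

theorem pairNorm_sq (ζ : ℂ) (z : ℝ) : pairNorm ζ z ^ 2 = z ^ 2 + Complex.normSq ζ :=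
  Real.sq_sqrt (add_nonneg (sq_nonneg _) (Complex.normSq_nonneg _))

theorem pairNorm_sq' (ζ : ℂ) (z : ℝ) : (pairNorm ζ z : ℂ) ^ 2 = z ^ 2 + conj ζ * ζ := by
  rw [← Complex.normSq_eq_conj_mul_self]
  exact_mod_cast pairNorm_sq ζ z

theorem pairNorm_nonneg (ζ : ℂ) (z : ℝ) : 0 ≤ pairNorm ζ z := Real.sqrt_nonneg _

theorem continuous_pairNorm : Continuous fun x : ℂ × ℝ => pairNorm x.1 x.2 := by
  have := Complex.continuous_normSq
  unfold pairNorm; fun_prop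

/-- `(σ, τ)` is a nowhere vanishing section of the line bundle of eigenvectors of
`[[z, conj ζ], [ζ, -z]]` for the positive eigenvalue. -/
structure IsEigenSection {X : Type*} [TopologicalSpace X] (ζ : X → ℂ) (z : X → ℝ)
    (σ τ : X → ℂ) : Prop where
  continuous_fst : Continuous σ
  continuous_snd : Continuous τ
  ne_zero : ∀ x, ¬(σ x = 0 ∧ τ x = 0)
  eq_fst : ∀ x, z x * σ x + conj (ζ x) * τ x = pairNorm (ζ x) (z x) * σ x
  eq_snd : ∀ x, ζ x * σ x - z x * τ x = pairNorm (ζ x) (z x) * τ x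

variable {X : Type*} [TopologicalSpace X]

theorem exists_isEigenSection_const (ζ : ℂ) (z : ℝ) :
    ∃ σ τ : X → ℂ, IsEigenSection (fun _ => ζ) (fun _ => z) σ τ := by
  have h2 := pairNorm_sq' ζ z
  by_cases h : ((pairNorm ζ z : ℂ) + z = 0 ∧ ζ = 0)
  · obtain ⟨h, rfl⟩ := h
    refine ⟨fun _ => 0, fun _ => 1, continuous_const, continuous_const, by simp, by simp, ?_⟩
    intro _
    linear_combination -h
  · refine ⟨fun _ => pairNorm ζ z + z, fun _ => ζ, continuous_const, continuous_const,
      fun _ => h, fun _ => ?_, fun _ => ?_⟩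
    · linear_combination -h2
    · ring

theorem IsEigenSection.transfer {ζ ζ' : X → ℂ} {z z' : X → ℝ} {σ τ : X → ℂ}
    (h : IsEigenSection ζ z σ τ) (hζ' : Continuous ζ') (hz' : Continuous z')
    (hpos : ∀ x, 0 < (conj (ζ x) * ζ' x).re + z x * z' x) :
    ∃ σ' τ' : X → ℂ, IsEigenSection ζ' z' σ' τ' := by
  have hr : Continuous fun x => pairNorm (ζ' x) (z' x) :=
    continuous_pairNorm.comp (hζ'.prodMk hz')
  have c1 := h.continuous_fst
  have c2 := h.continuous_snd
  refine ⟨fun x => pairNorm (ζ' x) (z' x) * σ x + (z' x * σ x + conj (ζ' x) * τ x),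
    fun x => pairNorm (ζ' x) (z' x) * τ x + (ζ' x * σ x - z' x * τ x), by fun_prop, by fun_prop,
    ?_, ?_, ?_⟩
  · rintro x ⟨h1, h2⟩
    have e1 := h.eq_fst x
    have e2 := h.eq_snd x
    have hp := hpos x
    have hn := h.ne_zero x
    have hs := pairNorm_sq (ζ x) (z x)
    have r0 := pairNorm_nonneg (ζ x) (z x)
    have r0' := pairNorm_nonneg (ζ' x) (z' x)
    generalize pairNorm (ζ x) (z x) = r at *
    generalize pairNorm (ζ' x) (z' x) = r' at *
    generalize ζ x = ζ at *
    generalize ζ' x = ζ' at *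
    generalize z x = z at *
    generalize z' x = z' at *
    generalize σ x = σ at *
    generalize τ x = τ at *
    have f1 : (r * z' + r' * z : ℂ) * σ + conj (r * ζ' + r' * ζ) * τ = 0 := by
      simp only [map_add, map_mul, Complex.conj_ofReal]
      linear_combination r * h1 + r' * e1
    have f2 : (r * ζ' + r' * ζ : ℂ) * σ - (r * z' + r' * z) * τ = 0 := by
      linear_combination r * h2 + r' * e2
    set Q : ℂ := r * ζ' + r' * ζ with hQ
    have g1 : (((r * z' + r' * z) ^ 2 + Complex.normSq Q : ℝ) : ℂ) * σ = 0 := by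
      push_cast [Complex.normSq_eq_conj_mul_self]
      linear_combination (r * z' + r' * z : ℂ) * f1 + conj Q * f2
    have g2 : (((r * z' + r' * z) ^ 2 + Complex.normSq Q : ℝ) : ℂ) * τ = 0 := by
      push_cast [Complex.normSq_eq_conj_mul_self]
      linear_combination Q * f1 - (r * z' + r' * z : ℂ) * f2
    have g : (r * z' + r' * z) ^ 2 + Complex.normSq Q = 0 := by
      by_contra hne
      have hne' : (((r * z' + r' * z) ^ 2 + Complex.normSq Q : ℝ) : ℂ) ≠ 0 :=
        Complex.ofReal_ne_zero.2 hne
      exact hn ⟨(mul_eq_zero.1 g1).resolve_left hne', (mul_eq_zero.1 g2).resolve_left hne'⟩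
    have hZ : r * z' + r' * z = 0 := by
      nlinarith [Complex.normSq_nonneg Q, sq_nonneg (r * z' + r' * z)]
    have hQ0 : Q = 0 := by
      rw [← Complex.normSq_eq_zero]
      nlinarith [Complex.normSq_nonneg Q, sq_nonneg (r * z' + r' * z)]
    have hre := congrArg Complex.re hQ0
    have him := congrArg Complex.im hQ0
    simp only [hQ, Complex.add_re, Complex.add_im, Complex.re_ofReal_mul, Complex.im_ofReal_mul,
      Complex.zero_re, Complex.zero_im] at hre him
    simp only [Complex.mul_re, Complex.conj_re, Complex.conj_im] at hp
    rw [Complex.normSq_apply] at hs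
    have key : r * (ζ.re * ζ'.re - -ζ.im * ζ'.im + z * z') = -(r' * r ^ 2) := by
      rw [hs]
      linear_combination ζ.re * hre + ζ.im * him + z * hZ
    have hr0 : r = 0 := by
      by_contra hne
      have := lt_of_le_of_ne r0 (Ne.symm hne)
      nlinarith [mul_pos this hp, mul_nonneg r0' (sq_nonneg r)]
    rw [hr0] at hs
    have a1 : ζ.re = 0 := by nlinarith [sq_nonneg ζ.re, sq_nonneg ζ.im, sq_nonneg z]
    have a2 : ζ.im = 0 := by nlinarith [sq_nonneg ζ.re, sq_nonneg ζ.im, sq_nonneg z]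
    have a3 : z = 0 := by nlinarith [sq_nonneg ζ.re, sq_nonneg ζ.im, sq_nonneg z]
    rw [a1, a2, a3] at hp
    simp at hp
  · intro x
    have hs := pairNorm_sq' (ζ' x) (z' x)
    linear_combination (-σ x) * hs
  · intro x
    have hs := pairNorm_sq' (ζ' x) (z' x)
    linear_combination (-τ x) * hs

theorem exists_isEigenSection_of_homotopy [CompactSpace X] {ζ : X → ℝ → ℂ} {z : X → ℝ → ℝ}
    (hζ : Continuous fun x : X × ℝ => ζ x.1 x.2) (hz : Continuous fun x : X × ℝ => z x.1 x.2)
    (hne : ∀ x u, ¬(ζ x u = 0 ∧ z x u = 0)) {u v : ℝ}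
    (h : ∃ σ τ : X → ℂ, IsEigenSection (fun x => ζ x u) (fun x => z x u) σ τ) :
    ∃ σ τ : X → ℂ, IsEigenSection (fun x => ζ x v) (fun x => z x v) σ τ := by
  have cζ : ∀ u, Continuous fun x => ζ x u := fun u =>
    hζ.comp (f := fun x => (x, u)) (by fun_prop)
  have cz : ∀ u, Continuous fun x => z x u := fun u =>
    hz.comp (f := fun x => (x, u)) (by fun_prop)
  refine ((isPreconnected_univ (α := ℝ)).induction₂ (fun u v =>
    ((∃ σ τ : X → ℂ, IsEigenSection (fun x => ζ x u) (fun x => z x u) σ τ) ↔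
    ∃ σ τ : X → ℂ, IsEigenSection (fun x => ζ x v) (fun x => z x v) σ τ)) ?_
    (fun _ _ _ _ _ _ => Iff.trans) (fun _ _ _ _ => Iff.symm) (mem_univ u) (mem_univ v)).1 h
  intro u _
  rw [nhdsWithin_univ]
  have key : ∀ᶠ v in 𝓝 u, ∀ x ∈ (univ : Set X),
      0 < (conj (ζ x u) * ζ x v).re + z x u * z x v := by
    refine isCompact_univ.eventually_forall_of_forall_eventually fun x _ => ?_
    have hc : Continuous fun y : ℝ × X =>
        (conj (ζ y.2 u) * ζ y.2 y.1).re + z y.2 u * z y.2 y.1 := by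
      have a1 := (cζ u).comp (continuous_snd (X := ℝ) (Y := X))
      have a2 := (cz u).comp (continuous_snd (X := ℝ) (Y := X))
      have a3 := hζ.comp (continuous_swap (X := ℝ) (Y := X))
      have a4 := hz.comp (continuous_swap (X := ℝ) (Y := X))
      simp only [Function.comp_def, Prod.swap] at a1 a2 a3 a4
      exact (Complex.continuous_re.comp ((Complex.continuous_conj.comp a1).mul a3)).add
        (a2.mul a4)
    refine hc.continuousAt.eventually (lt_mem_nhds ?_)
    simp only
    rw [← Complex.normSq_eq_conj_mul_self, Complex.ofReal_re]
    rcases not_and_or.1 (hne x u) with h | h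
    · exact add_pos_of_pos_of_nonneg (Complex.normSq_pos.2 h) (mul_self_nonneg _)
    · exact add_pos_of_nonneg_of_pos (Complex.normSq_nonneg _) (mul_self_pos.2 h)
  filter_upwards [key] with v hv
  constructor
  · rintro ⟨σ, τ, h⟩
    exact h.transfer (cζ v) (cz v) fun x => hv x (mem_univ _)
  · rintro ⟨σ, τ, h⟩
    refine h.transfer (cζ u) (cz u) fun x => ?_
    have := hv x (mem_univ _)
    simp only [Complex.mul_re, Complex.conj_re, Complex.conj_im] at this ⊢
    linarith

theorem stereographic_inner_pos {e f a₂ A₂ b₁ b₂ B₁ B₂ : ℝ}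
    (h1 : e ^ 2 + a₂ ^ 2 + (b₁ * b₁ + b₂ * b₂) = 1)
    (h2 : f ^ 2 + A₂ ^ 2 + (B₁ * B₁ + B₂ * B₂) = 1) (h3 : 0 < 1 + e) (h4 : 0 < 1 - f)
    (h5 : 1 - f < 1 + e) :
    0 < B₁ / (1 - f) * (b₁ / (1 + e) + B₁ / (1 - f)) -
      -B₂ / (1 - f) * (b₂ / (1 + e) + B₂ / (1 - f)) +
      A₂ / (1 - f) * (a₂ / (1 + e) + A₂ / (1 - f)) := by
  obtain ⟨c, rfl⟩ : ∃ c, e = c - 1 := ⟨1 + e, by ring⟩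
  obtain ⟨d, rfl⟩ : ∃ d, f = 1 - d := ⟨1 - f, by ring⟩
  simp only [add_sub_cancel, sub_sub_cancel] at *
  have key : 0 < c * d * (b₁ * B₁ + b₂ * B₂ + a₂ * A₂ + c * (2 - d)) := by
    have : c * d * (b₁ * B₁ + b₂ * B₂ + a₂ * A₂ + c * (2 - d)) =
        ((c * B₁ + d * b₁) ^ 2 + (c * B₂ + d * b₂) ^ 2 + (c * A₂ + d * a₂) ^ 2) / 2 +
        c * d * (c - d) := by
      linear_combination (-c ^ 2 / 2) * h2 - (d ^ 2 / 2) * h1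
    rw [this]
    have := mul_pos (mul_pos h3 h4) (sub_pos.2 h5)
    positivity
  have : B₁ / d * (b₁ / c + B₁ / d) - -B₂ / d * (b₂ / c + B₂ / d) +
      A₂ / d * (a₂ / c + A₂ / d) =
      c * d * (b₁ * B₁ + b₂ * B₂ + a₂ * A₂ + c * (2 - d)) / (c * d) ^ 2 := by
    field_simp
    linear_combination c * h2
  rw [this]
  exact div_pos key (by positivity)

/-- A map `(al, be)` from a compact space to the `3`-sphere that avoids the antipodes of a path
which starts at the identity and never returns there: the stereographic image of `(al, be)`,
seen from the antipode of the end point of the path, carries a section. -/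
theorem exists_isEigenSection_of_avoids_path [CompactSpace X] {al be : X → ℂ}
    (hal : Continuous al) (hbe : Continuous be)
    (hunit : ∀ x, conj (al x) * al x + conj (be x) * be x = 1) (hre : ∀ x, (al x).re ≠ -1)
    {a b : ℝ} (hab : a < b) {A B : ℝ → ℂ} (hA : Continuous A) (hB : Continuous B)
    (hAB : ∀ u, conj (A u) * A u + conj (B u) * B u = 1) (hAa : A a = 1)
    (hA1 : ∀ u ∈ Ioc a b, A u ≠ 1)
    (hne : ∀ x, ∀ u ∈ Icc a b, ¬(al x = -A u ∧ be x = -B u)) :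
    ∃ σ τ : X → ℂ, IsEigenSection (fun x => be x / ((1 + (al x).re : ℝ) : ℂ) +
        B b / ((1 - (A b).re : ℝ) : ℂ))
      (fun x => (al x).im / (1 + (al x).re) + (A b).im / (1 - (A b).re)) σ τ := by
  have hunit' : ∀ x, (al x).re ^ 2 + (al x).im ^ 2 + Complex.normSq (be x) = 1 := by
    intro x
    have := hunit x
    rw [← Complex.normSq_eq_conj_mul_self, ← Complex.normSq_eq_conj_mul_self] at this
    have h : Complex.normSq (al x) + Complex.normSq (be x) = 1 := by exact_mod_cast this
    rw [Complex.normSq_apply (al x)] at h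
    linarith
  have hAB' : ∀ u, (A u).re ^ 2 + (A u).im ^ 2 + Complex.normSq (B u) = 1 := by
    intro x
    have := hAB x
    rw [← Complex.normSq_eq_conj_mul_self, ← Complex.normSq_eq_conj_mul_self] at this
    have h : Complex.normSq (A x) + Complex.normSq (B x) = 1 := by exact_mod_cast this
    rw [Complex.normSq_apply (A x)] at h
    linarith
  have hc : ∀ x, 0 < 1 + (al x).re := by
    intro x
    have h1 := hunit' x
    have h2 : (al x).re + 1 ≠ 0 := fun h => hre x (by linarith)
    by_contra hn
    have : (al x).re + 1 < 0 := lt_of_le_of_ne (by linarith) h2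
    nlinarith [sq_nonneg (al x).im, Complex.normSq_nonneg (be x)]
  have hd : ∀ u ∈ Ioc a b, 0 < 1 - (A u).re := by
    intro u hu
    have h1 := hAB' u
    have h0 := Complex.normSq_nonneg (B u)
    by_contra hn
    have e1 : (A u).re = 1 := by nlinarith [sq_nonneg (A u).im]
    have e2 : (A u).im = 0 := by nlinarith [sq_nonneg (A u).im]
    exact hA1 u hu (Complex.ext e1 e2)
  obtain ⟨u₀, hu₀, hlt⟩ : ∃ u₀ ∈ Ioc a b, ∀ x, 1 - (A u₀).re < 1 + (al x).re := by
    have key : ∀ᶠ u in 𝓝 a, ∀ x ∈ (univ : Set X), 1 - (A u).re < 1 + (al x).re := by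
      refine isCompact_univ.eventually_forall_of_forall_eventually fun x _ => ?_
      have c1 : Continuous fun y : ℝ × X => 1 - (A y.1).re := by
        have := Complex.continuous_re; fun_prop
      have c2 : Continuous fun y : ℝ × X => 1 + (al y.2).re := by
        have := Complex.continuous_re; fun_prop
      refine c1.continuousAt.eventually_lt c2.continuousAt ?_
      simpa [hAa] using hc x
    obtain ⟨u₀, h1, h2⟩ :=
      ((key.filter_mono nhdsWithin_le_nhds).and (Ioc_mem_nhdsGT hab)).exists
    exact ⟨u₀, h2, fun x => h1 x (mem_univ _)⟩
  have hproj : ∀ u, (projIcc u₀ b hu₀.2 u : ℝ) ∈ Ioc a b := fun u =>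
    ⟨hu₀.1.trans_le (projIcc u₀ b hu₀.2 u).2.1, (projIcc u₀ b hu₀.2 u).2.2⟩
  have hre' := Complex.continuous_re
  have him' := Complex.continuous_im
  have hofR := Complex.continuous_ofReal
  have start : ∃ σ τ : X → ℂ, IsEigenSection (fun x => be x / ((1 + (al x).re : ℝ) : ℂ) +
        B u₀ / ((1 - (A u₀).re : ℝ) : ℂ))
      (fun x => (al x).im / (1 + (al x).re) + (A u₀).im / (1 - (A u₀).re)) σ τ := by
    obtain ⟨σ, τ, h⟩ := exists_isEigenSection_const (X := X) (B u₀ / ((1 - (A u₀).re : ℝ) : ℂ))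
      ((A u₀).im / (1 - (A u₀).re))
    refine h.transfer ?_ ?_ fun x => ?_
    · refine (hbe.div (by fun_prop) fun x => ?_).add continuous_const
      exact_mod_cast (hc x).ne'
    · exact ((him'.comp hal).div (by fun_prop) fun x => (hc x).ne').add continuous_const
    · have h1 := hunit' x
      have h2 := hAB' u₀
      have h3 := hc x
      have h4 := hd u₀ hu₀
      have h5 := hlt x
      simp only [Complex.mul_re, Complex.add_re, Complex.add_im, Complex.div_ofReal_re,
        Complex.div_ofReal_im, map_div₀, Complex.conj_ofReal, Complex.conj_re, Complex.conj_im]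
      rw [Complex.normSq_apply] at h1 h2
      exact stereographic_inner_pos h1 h2 h3 h4 h5
  have := exists_isEigenSection_of_homotopy
    (ζ := fun x u => be x / ((1 + (al x).re : ℝ) : ℂ) +
        B (projIcc u₀ b hu₀.2 u) / ((1 - (A (projIcc u₀ b hu₀.2 u)).re : ℝ) : ℂ))
    (z := fun x u => (al x).im / (1 + (al x).re) +
      (A (projIcc u₀ b hu₀.2 u)).im / (1 - (A (projIcc u₀ b hu₀.2 u)).re)) (u := u₀) (v := b)
    ?_ ?_ ?_ (by simpa using start)
  · simpa using this
  · refine (Continuous.div (by fun_prop) (by fun_prop) fun x => ?_).add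
      (Continuous.div (by fun_prop) (by fun_prop) fun x => ?_)
    · exact_mod_cast (hc x.1).ne'
    · exact_mod_cast (hd _ (hproj x.2)).ne'
  · refine (Continuous.div (by fun_prop) (by fun_prop) fun x => ?_).add
      (Continuous.div (by fun_prop) (by fun_prop) fun x => ?_)
    · exact (hc x.1).ne'
    · exact (hd _ (hproj x.2)).ne'
  · rintro x u ⟨h1, h2⟩
    have hu := hproj u
    generalize (projIcc u₀ b hu₀.2 u : ℝ) = v at *
    have e1 := hunit' x
    have e2 := hAB' v
    have e3 := hc x
    have e4 := hd v hu
    have e3' : ((1 + (al x).re : ℝ) : ℂ) ≠ 0 := by exact_mod_cast e3.ne'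
    have e4' : ((1 - (A v).re : ℝ) : ℂ) ≠ 0 := by exact_mod_cast e4.ne'
    refine hne x v ⟨hu.1.le, hu.2⟩ ?_
    rw [div_add_div _ _ e3' e4', div_eq_zero_iff, or_iff_left (mul_ne_zero e3' e4')] at h1
    rw [div_add_div _ _ e3.ne' e4.ne', div_eq_zero_iff, or_iff_left (mul_pos e3 e4).ne'] at h2
    have g1 := congrArg Complex.re h1
    have g2 := congrArg Complex.im h1
    simp only [Complex.add_re, Complex.add_im, Complex.re_ofReal_mul, Complex.im_ofReal_mul,
      Complex.re_mul_ofReal, Complex.im_mul_ofReal, Complex.zero_re, Complex.zero_im] at g1 g2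
    rw [Complex.normSq_apply] at e1 e2
    have hcd : 1 + (al x).re = 1 - (A v).re := by
      have : (1 + (al x).re) * (1 - (A v).re) * ((1 + (al x).re) - (1 - (A v).re)) = 0 := by
        linear_combination ((1 - (A v).re) ^ 2 / 2) * e1 - ((1 + (al x).re) ^ 2 / 2) * e2 -
          (((be x).re * (1 - (A v).re) - (1 + (al x).re) * (B v).re) / 2) * g1 -
          (((be x).im * (1 - (A v).re) - (1 + (al x).re) * (B v).im) / 2) * g2 -
          (((al x).im * (1 - (A v).re) - (1 + (al x).re) * (A v).im) / 2) * h2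
      exact sub_eq_zero.1 ((mul_eq_zero.1 this).resolve_left (mul_pos e3 e4).ne')
    rw [← hcd] at g1 g2 h2
    constructor <;> apply Complex.ext <;> simp only [Complex.neg_re, Complex.neg_im]
    · linarith
    · exact mul_right_cancel₀ e3.ne' (by linarith)
    · exact mul_right_cancel₀ e3.ne' (by linarith)
    · exact mul_right_cancel₀ e3.ne' (by linarith)

theorem IsSpinor.continuous_relDiag {p q : ℝ → ℂ} {k : ℝ → ℝ} (h : IsSpinor p q k) :
    Continuous fun x : ℝ × ℝ => relDiag p q x.1 x.2 := by
  have := h.contDiff_fst.continuous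
  have := h.contDiff_snd.continuous
  have := Complex.continuous_conj
  unfold relDiag; fun_prop

theorem IsEigenSection.comp {Y : Type*} [TopologicalSpace Y] {ζ : X → ℂ} {z : X → ℝ}
    {σ τ : X → ℂ} (h : IsEigenSection ζ z σ τ) {g : Y → X} (hg : Continuous g) :
    IsEigenSection (fun y => ζ (g y)) (fun y => z (g y)) (fun y => σ (g y)) fun y => τ (g y) where
  continuous_fst := h.continuous_fst.comp hg
  continuous_snd := h.continuous_snd.comp hg
  ne_zero y := h.ne_zero (g y)
  eq_fst y := h.eq_fst (g y)
  eq_snd y := h.eq_snd (g y)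

theorem IsSpinor.exists_periodic_isEigenSection {p q : ℝ → ℂ} {k : ℝ → ℝ} (h : IsSpinor p q k)
    {l : ℝ} (hl : 0 < l) (hp : Function.Periodic p l) (hq : Function.Periodic q l)
    (hre : ∀ s u, (relDiag p q s u).re ≠ -1)
    {a b : ℝ} (hab : a < b) {A B : ℝ → ℂ} (hA : Continuous A) (hB : Continuous B)
    (hAB : ∀ u, conj (A u) * A u + conj (B u) * B u = 1) (hAa : A a = 1)
    (hA1 : ∀ u ∈ Ioc a b, A u ≠ 1) (hBb : B b = 0)
    (hne : ∀ s u, ∀ v ∈ Icc a b, ¬(relDiag p q s u = -A v ∧ relOff p q s u = -B v)) :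
    ∃ σ τ : ℝ × ℝ → ℂ,
      IsEigenSection (fun x => relOff p q x.1 x.2 / ((1 + (relDiag p q x.1 x.2).re : ℝ) : ℂ))
        (fun x => (relDiag p q x.1 x.2).im / (1 + (relDiag p q x.1 x.2).re) +
          (A b).im / (1 - (A b).re)) σ τ ∧
      ∀ s u, τ (s + l, u) = τ (s, u) ∧ τ (s, u + l) = τ (s, u) := by
  have : Fact (0 < l) := ⟨hl⟩
  have hpc : Continuous hp.lift := continuous_quot_lift _ h.contDiff_fst.continuous
  have hqc : Continuous hq.lift := continuous_quot_lift _ h.contDiff_snd.continuous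
  obtain ⟨σ, τ, hs⟩ := exists_isEigenSection_of_avoids_path (X := AddCircle l × AddCircle l)
    (al := fun x => conj (hp.lift x.1) * hp.lift x.2 + conj (hq.lift x.1) * hq.lift x.2)
    (be := fun x => hp.lift x.1 * hq.lift x.2 - hq.lift x.1 * hp.lift x.2)
    (by have := Complex.continuous_conj; fun_prop) (by fun_prop)
    (by
      rintro ⟨x, y⟩
      obtain ⟨s, rfl⟩ := QuotientAddGroup.mk_surjective x
      obtain ⟨u, rfl⟩ := QuotientAddGroup.mk_surjective y
      exact h.rel_unit s u)
    (by
      rintro ⟨x, y⟩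
      obtain ⟨s, rfl⟩ := QuotientAddGroup.mk_surjective x
      obtain ⟨u, rfl⟩ := QuotientAddGroup.mk_surjective y
      exact hre s u)
    hab hA hB hAB hAa hA1
    (by
      rintro ⟨x, y⟩
      obtain ⟨s, rfl⟩ := QuotientAddGroup.mk_surjective x
      obtain ⟨u, rfl⟩ := QuotientAddGroup.mk_surjective y
      exact hne s u)
  have hg : Continuous fun x : ℝ × ℝ => ((x.1 : AddCircle l), (x.2 : AddCircle l)) :=
    ((AddCircle.continuous_mk' l).comp continuous_fst).prodMk
      ((AddCircle.continuous_mk' l).comp continuous_snd)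
  refine ⟨fun x => σ (x.1, x.2), fun x => τ (x.1, x.2), ?_, ?_⟩
  · simp only [hBb, zero_div, add_zero] at hs
    exact hs.comp hg
  · intro s u
    simp only
    rw [AddCircle.coe_add_period, AddCircle.coe_add_period]
    exact ⟨rfl, rfl⟩

theorem IsSpinor.not_avoids_path {p q : ℝ → ℂ} {k : ℝ → ℝ} (h : IsSpinor p q k)
    {l : ℝ} (hl : 0 < l) (hp : Function.Periodic p l) (hq : Function.Periodic q l)
    {c d : ℝ} (h0 : relOff p q c d = 0) (him : 0 < (relDiag p q c d).im)
    (hneg : (relDiag p q c d).re < 0)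
    (hzero : ∀ s u, relOff p q s u = 0 → (∃ n : ℤ, u = s + n * l) ∨
      (∃ m n : ℤ, s = c + m * l ∧ u = d + n * l) ∨ ∃ m n : ℤ, s = d + m * l ∧ u = c + n * l)
    (hre : ∀ s u, (relDiag p q s u).re ≠ -1)
    {a b : ℝ} (hab : a < b) {A B : ℝ → ℂ} (hA : Continuous A) (hB : Continuous B)
    (hAB : ∀ u, conj (A u) * A u + conj (B u) * B u = 1) (hAa : A a = 1)
    (hA1 : ∀ u ∈ Ioc a b, A u ≠ 1) (hBb : B b = 0) (hAre : (A b).re < 0) (hAim : (A b).im < 0)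
    (hne : ∀ s u, ∀ v ∈ Icc a b, ¬(relDiag p q s u = -A v ∧ relOff p q s u = -B v)) :
    False := by
  obtain ⟨σ, τ, hs, hper⟩ :=
    h.exists_periodic_isEigenSection hl hp hq hre hab hA hB hAB hAa hA1 hBb hne
  set t : ℝ := (A b).im / (1 - (A b).re) with ht
  have ht0 : t < 0 := div_neg_of_neg_of_pos hAim (by linarith)
  have ht1 : -1 < t := by
    rw [ht, lt_div_iff₀ (by linarith)]
    have := hAB b
    rw [hBb, mul_zero, add_zero, ← Complex.normSq_eq_conj_mul_self] at this
    have h1 : Complex.normSq (A b) = 1 := by exact_mod_cast this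
    rw [Complex.normSq_apply] at h1
    nlinarith [sq_nonneg (A b).re]
  have unit_of : ∀ s u, relOff p q s u = 0 →
      (relDiag p q s u).re ^ 2 + (relDiag p q s u).im ^ 2 = 1 := by
    intro s u h0
    have := h.rel_unit s u
    rw [h0, mul_zero, add_zero, ← Complex.normSq_eq_conj_mul_self] at this
    have h1 : Complex.normSq (relDiag p q s u) = 1 := by exact_mod_cast this
    rw [Complex.normSq_apply] at h1
    linarith
  have hc : ∀ s u, 1 + (relDiag p q s u).re ≠ 0 := fun s u e => hre s u (by linarith)
  have hcC : ∀ s u, ((1 + (relDiag p q s u).re : ℝ) : ℂ) ≠ 0 := fun s u => by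
    exact_mod_cast hc s u
  set ζ : ℝ × ℝ → ℂ := fun x => relOff p q x.1 x.2 / ((1 + (relDiag p q x.1 x.2).re : ℝ) : ℂ)
    with hζ
  set z : ℝ × ℝ → ℝ := fun x => (relDiag p q x.1 x.2).im / (1 + (relDiag p q x.1 x.2).re) + t
    with hz
  have hτ : ∀ s u, τ (s, u) = 0 → relOff p q s u = 0 ∧ 0 ≤ z (s, u) := by
    intro s u hτ
    have e1 := hs.eq_fst (s, u)
    have e2 := hs.eq_snd (s, u)
    have hσ : σ (s, u) ≠ 0 := fun hσ => hs.ne_zero _ ⟨hσ, hτ⟩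
    rw [hτ] at e1 e2
    simp only [mul_zero, add_zero, sub_zero] at e1 e2
    have e3 := mul_right_cancel₀ hσ e1
    have e4 : z (s, u) = pairNorm (ζ (s, u)) (z (s, u)) := by exact_mod_cast e3
    refine ⟨?_, e4 ▸ pairNorm_nonneg _ _⟩
    have e5 := (mul_eq_zero.1 e2).resolve_right hσ
    exact (div_eq_zero_iff.1 e5).resolve_right (hcC s u)
  have hunit0 := unit_of c d h0
  have hz0 : 0 < z (c, d) := by
    have h1 : 0 < 1 + (relDiag p q c d).re := by nlinarith
    have : 1 < (relDiag p q c d).im / (1 + (relDiag p q c d).re) := by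
      rw [lt_div_iff₀ h1]
      nlinarith
    simp only [hz]
    linarith
  have relDiag_per : ∀ (s u : ℝ) (m n : ℤ), relDiag p q (s + m * l) (u + n * l) =
      relDiag p q s u := by
    intro s u m n
    simp only [relDiag, hp.int_mul m s, hp.int_mul n u, hq.int_mul m s, hq.int_mul n u]
  have hzpos : ∀ s u, τ (s, u) = 0 → ∃ m n : ℤ, s = c + m * l ∧ u = d + n * l := by
    intro s u hτ0
    obtain ⟨h1, h2⟩ := hτ s u hτ0
    simp only [hz] at h2
    rcases hzero s u h1 with ⟨n, rfl⟩ | h3 | ⟨m, n, rfl, rfl⟩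
    · have := relDiag_per s s 0 n
      rw [Int.cast_zero, zero_mul, add_zero] at this
      rw [this, h.relDiag_self] at h2
      simp at h2
      linarith
    · exact h3
    · rw [relDiag_per, relDiag_swap] at h2
      simp only [Complex.conj_re, Complex.conj_im] at h2
      have h1 : 0 < 1 + (relDiag p q c d).re := by nlinarith
      have := div_neg_of_neg_of_pos (neg_neg_of_pos him) h1
      linarith
  have ka := h.pos c
  have kb := h.pos d
  obtain ⟨f', hf, hf'⟩ := h.hasFDerivAt_relOff h0
  set α := relDiag p q c d with hα
  have hPR : (conj (-(k c * α) : ℂ) * (k d * conj α)).im ≠ 0 := by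
    have : conj (-(k c * α) : ℂ) * (k d * conj α) = ((-(k c * k d) : ℝ) : ℂ) * conj (α ^ 2) := by
      simp; ring
    rw [this, Complex.im_ofReal_mul, Complex.conj_im]
    refine mul_ne_zero (neg_ne_zero.2 (mul_pos ka kb).ne') (neg_ne_zero.2 ?_)
    rw [pow_two, Complex.mul_im]
    nlinarith
  have hlim := tendsto_div_lin2 hf hf' h0 hPR
  have hr0 : pairNorm (ζ (c, d)) (z (c, d)) = z (c, d) := by
    simp only [pairNorm, hζ, h0, zero_div, map_zero, add_zero]
    exact Real.sqrt_sq hz0.le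
  have hσ0 : σ (c, d) ≠ 0 := by
    intro e
    have e2 := hs.eq_snd (c, d)
    rw [hr0, e] at e2
    have e3 : (z (c, d) : ℂ) * τ (c, d) = 0 := by linear_combination -e2 / 2
    exact hs.ne_zero _ ⟨e, (mul_eq_zero.1 e3).resolve_left (by exact_mod_cast hz0.ne')⟩
  have hrz : Continuous fun x => (pairNorm (ζ x) (z x) + z x) := by
    have c1 : Continuous z := ((Complex.continuous_im.comp h.continuous_relDiag).div
      (continuous_const.add (Complex.continuous_re.comp h.continuous_relDiag))
      fun x => hc x.1 x.2).add continuous_const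
    have c2 : Continuous ζ := h.continuous_relOff.div (Complex.continuous_ofReal.comp
      (continuous_const.add (Complex.continuous_re.comp h.continuous_relDiag)))
      fun x => hcC x.1 x.2
    exact (continuous_pairNorm.comp (c2.prodMk c1)).add c1
  have hrz0 : pairNorm (ζ (c, d)) (z (c, d)) + z (c, d) ≠ 0 := by rw [hr0]; positivity
  have hlim' : Tendsto (fun x => τ x / lin2 (-(k c * α)) (k d * conj α) (x - (c, d)))
      (𝓝[≠] (c, d)) (𝓝 (σ (c, d) / ((1 + α.re : ℝ) *
        (pairNorm (ζ (c, d)) (z (c, d)) + z (c, d) : ℝ)))) := by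
    have g1 : Tendsto (fun x : ℝ × ℝ => σ x / ((1 + (relDiag p q x.1 x.2).re : ℝ) *
        (pairNorm (ζ x) (z x) + z x : ℝ) : ℂ)) (𝓝[≠] (c, d)) (𝓝 (σ (c, d) / ((1 + α.re : ℝ) *
        (pairNorm (ζ (c, d)) (z (c, d)) + z (c, d) : ℝ)))) := by
      refine (hs.continuous_fst.continuousAt.div (((Complex.continuous_ofReal.comp
        (continuous_const.add (Complex.continuous_re.comp h.continuous_relDiag))).mul
        (Complex.continuous_ofReal.comp hrz)).continuousAt) ?_).tendsto.mono_left
          nhdsWithin_le_nhds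
      exact mul_ne_zero (hcC c d) (Complex.ofReal_ne_zero.2 hrz0)
    have g2 := hlim.mul g1
    rw [one_mul] at g2
    refine g2.congr' ?_
    filter_upwards [nhdsWithin_le_nhds (hrz.continuousAt.eventually_ne hrz0)] with x hx
    have e2 := hs.eq_snd x
    have hx' : ((pairNorm (ζ x) (z x) + z x : ℝ) : ℂ) ≠ 0 := by exact_mod_cast hx
    have e3 : τ x = ζ x * σ x / ((pairNorm (ζ x) (z x) + z x : ℝ) : ℂ) := by
      rw [eq_div_iff hx']
      push_cast
      linear_combination -e2
    rw [e3, hζ]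
    simp only [div_eq_mul_inv, mul_inv]
    ring
  refine doublyPeriodic_no_simple_zero (h := l / 2) (half_pos hl)
    (k := fun x => τ (c + x.1, d + x.2)) ?_ ?_ ?_ ?_ hPR ?_ ?_ (m := (σ (c, d) / ((1 + α.re : ℝ) *
        (pairNorm (ζ (c, d)) (z (c, d)) + z (c, d) : ℝ))))
  · have := hs.continuous_snd
    fun_prop
  · intro y
    simp only
    rw [← (hper _ _).1]
    congr 2; ring
  · intro x
    simp only
    rw [← (hper _ _).2]
    congr 2; ring
  · intro x hx y hy e
    obtain ⟨m, n, e1, e2⟩ := hzpos _ _ e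
    have small : ∀ (y : ℝ) (n : ℤ), y ∈ Icc (-(l / 2)) (l / 2) → y = n * l → y = 0 := by
      intro y n hy e
      have h1 : (n : ℝ) < 1 := by
        by_contra hn
        nlinarith [hy.2, mul_le_mul_of_nonneg_right (not_lt.1 hn) hl.le]
      have h2 : (-1 : ℝ) < n := by
        by_contra hn
        nlinarith [hy.1, mul_le_mul_of_nonneg_right (not_lt.1 hn) hl.le]
      have h3 : n < 1 := by exact_mod_cast h1
      have h4 : -1 < n := by exact_mod_cast h2
      obtain rfl : n = 0 := by omega
      simpa using e
    exact ⟨small x m hx (by linarith), small y n hy (by linarith)⟩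
  · exact div_ne_zero hσ0 (mul_ne_zero (hcC c d) (by exact_mod_cast hrz0))
  · have hshift : Tendsto (fun x : ℝ × ℝ => (c + x.1, d + x.2)) (𝓝[≠] 0) (𝓝[≠] (c, d)) := by
      refine tendsto_nhdsWithin_of_tendsto_nhds_of_eventually_within _ ?_ ?_
      · refine (Continuous.tendsto' (by fun_prop) _ _ ?_).mono_left nhdsWithin_le_nhds
        simp
      · filter_upwards [self_mem_nhdsWithin] with x hx e
        apply hx
        have e : (c + x.1, d + x.2) = (c, d) := e
        simp only [Prod.mk.injEq, add_eq_left] at e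
        exact Prod.ext e.1 e.2
    refine (hlim'.comp hshift).congr fun x => ?_
    simp

theorem IsRegularCurve.norm3_deriv_pos {γ : ℝ → R3} (h : IsRegularCurve γ) (s : ℝ) :
    0 < norm3 (deriv γ s) := by
  refine Real.sqrt_pos.2 ?_
  have h0 := h.reg s
  by_contra hn
  apply h0
  simp only [dot3, not_lt] at hn
  ext i
  fin_cases i <;> simp only [Fin.zero_eta, Fin.mk_one, Fin.reduceFinMk, Pi.zero_apply] <;>
    nlinarith [sq_nonneg (deriv γ s 0), sq_nonneg (deriv γ s 1), sq_nonneg (deriv γ s 2)]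

theorem star_eq_adjugate {A : Mat2} (h : A ∈ Matrix.specialUnitaryGroup (Fin 2) ℂ) :
    star A = A.adjugate := by
  obtain ⟨h1, h2⟩ := Matrix.mem_specialUnitaryGroup_iff.1 h
  have h3 : A * star A = 1 := (Matrix.mem_unitaryGroup_iff).1 h1
  calc star A = A.adjugate * A * star A := by rw [Matrix.adjugate_mul, h2, one_smul, one_mul]
    _ = A.adjugate := by rw [mul_assoc, h3, mul_one]

theorem inv_eq_star {A : Mat2} (h : A ∈ Matrix.specialUnitaryGroup (Fin 2) ℂ) :
    A⁻¹ = star A :=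
  Matrix.inv_eq_right_inv (Matrix.mem_unitaryGroup_iff.1
    (Matrix.mem_specialUnitaryGroup_iff.1 h).1)

theorem entries_of_mem {A : Mat2} (h : A ∈ Matrix.specialUnitaryGroup (Fin 2) ℂ) :
    A 1 1 = conj (A 0 0) ∧ A 0 1 = -conj (A 1 0) ∧
      conj (A 0 0) * A 0 0 + conj (A 1 0) * A 1 0 = 1 := by
  have h1 := star_eq_adjugate h
  have e1 := congrFun (congrFun h1 0) 0
  have e2 := congrFun (congrFun h1 0) 1
  have h2 := (Matrix.mem_specialUnitaryGroup_iff.1 h).2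
  rw [Matrix.det_fin_two] at h2
  simp only [Matrix.star_apply, Matrix.adjugate_fin_two, Matrix.of_apply, Matrix.cons_val_zero,
    Matrix.cons_val_one, RCLike.star_def, Matrix.cons_val', Matrix.cons_val_fin_one] at e1 e2
  refine ⟨e1.symm, by rw [e2, neg_neg], ?_⟩
  rw [e1, e2]
  linear_combination h2

namespace IsLift

variable {γ : ℝ → R3} {c : ℝ → Mat2}

theorem relations (hc : IsLift γ c) (s : ℝ) :
    2 * conj (c s 0 0) * c s 1 0 = γ s 0 - γ s 1 * Complex.I ∧
    conj (c s 0 0) * c s 0 0 - conj (c s 1 0) * c s 1 0 = γ s 2 ∧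
    conj (c s 0 0) ^ 2 - c s 1 0 ^ 2 =
      (norm3 (deriv γ s))⁻¹ * (deriv γ s 0 - deriv γ s 1 * Complex.I) ∧
    -(c s 0 0 * c s 1 0 + conj (c s 0 0) * conj (c s 1 0)) =
      (norm3 (deriv γ s))⁻¹ * deriv γ s 2 := by
  obtain ⟨e1, e2, e3⟩ := entries_of_mem (hc.mem s)
  have h3 := hc.ad3 s
  have h1 := hc.ad1 s
  rw [AdM, inv_eq_star (hc.mem s)] at h3 h1
  have a1 := congrFun (congrFun h3 1) 0
  have a2 := congrFun (congrFun h3 0) 0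
  have b1 := congrFun (congrFun h1 1) 0
  have b2 := congrFun (congrFun h1 0) 0
  simp [Matrix.mul_apply, Fin.sum_univ_two, Matrix.star_apply, E3, E1, E2, toSu2, e1, e2] at a1 a2 b1 b2
  have hI := Complex.I_mul_I
  refine ⟨?_, ?_, ?_, ?_⟩
  · linear_combination -Complex.I * a1 + (2 * conj (c s 0 0) * c s 1 0 - γ s 0) * hI
  · linear_combination -Complex.I * a2 +
      (conj (c s 0 0) * c s 0 0 - conj (c s 1 0) * c s 1 0 - γ s 2) * hI
  · push_cast
    linear_combination -Complex.I * b1 +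
      (conj (c s 0 0) ^ 2 - c s 1 0 ^ 2 - (norm3 (deriv γ s) : ℂ)⁻¹ * deriv γ s 0) * hI
  · push_cast
    linear_combination -Complex.I * b2 +
      (-(c s 0 0 * c s 1 0 + conj (c s 0 0) * conj (c s 1 0)) -
        (norm3 (deriv γ s) : ℂ)⁻¹ * deriv γ s 2) * hI

theorem relations_deriv (hreg : IsRegularCurve γ) (hc : IsLift γ c) (s : ℝ) :
    (norm3 (deriv γ s)) * (conj (c s 0 0) ^ 2 - c s 1 0 ^ 2) =
      (deriv γ s 0 - deriv γ s 1 * Complex.I) ∧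
    -(norm3 (deriv γ s) * (c s 0 0 * c s 1 0 + conj (c s 0 0) * conj (c s 1 0))) =
      deriv γ s 2 := by
  obtain ⟨-, -, r1, r2⟩ := hc.relations s
  have hm : (norm3 (deriv γ s) : ℂ) ≠ 0 := by exact_mod_cast (hreg.norm3_deriv_pos s).ne'
  rw [r1, ← mul_neg, r2]
  push_cast
  constructor <;> field_simp

theorem isSpinor (hreg : IsRegularCurve γ) (hc : IsLift γ c) :
    IsSpinor (fun s => c s 0 0) (fun s => c s 1 0) (fun s => norm3 (deriv γ s) / 2) where
  contDiff_fst := (hc.smooth 0 0).of_le (by exact_mod_cast le_top)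
  contDiff_snd := (hc.smooth 1 0).of_le (by exact_mod_cast le_top)
  unit s := (entries_of_mem (hc.mem s)).2.2
  pos s := half_pos (hreg.norm3_deriv_pos s)
  speed s := by
    have dp : HasDerivAt (fun s => c s 0 0) (deriv (fun s => c s 0 0) s) s :=
      (((hc.smooth 0 0).differentiable (by simp)) s).hasDerivAt
    have dq : HasDerivAt (fun s => c s 1 0) (deriv (fun s => c s 1 0) s) s :=
      (((hc.smooth 1 0).differentiable (by simp)) s).hasDerivAt
    have dP : HasDerivAt (fun s => conj (c s 0 0)) (conj (deriv (fun s => c s 0 0) s)) s := dp.star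
    have dQ : HasDerivAt (fun s => conj (c s 1 0)) (conj (deriv (fun s => c s 1 0) s)) s := dq.star
    have dγ : HasDerivAt γ (deriv γ s) s :=
      ((hreg.smooth.differentiable (by simp)) s).hasDerivAt
    have dγi (i : Fin 3) : HasDerivAt (fun t => (γ t i : ℂ)) (deriv γ s i : ℂ) s :=
      (hasDerivAt_pi.1 dγ i).ofReal_comp
    obtain ⟨r1, r2⟩ := hc.relations_deriv hreg s
    have u := (entries_of_mem (hc.mem s)).2.2
    have x1 := ((dP.const_mul 2).mul dq).unique
      (((dγi 0).sub ((dγi 1).mul_const Complex.I)).congr_of_eventuallyEq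
        (Eventually.of_forall fun t => (hc.relations t).1))
    have x2 := ((dP.mul dp).sub (dQ.mul dq)).unique
      ((dγi 2).congr_of_eventuallyEq (Eventually.of_forall fun t => (hc.relations t).2.1))
    have x3 := ((dP.mul dp).add (dQ.mul dq)).unique
      ((hasDerivAt_const s (1 : ℂ)).congr_of_eventuallyEq
        (Eventually.of_forall fun t => (entries_of_mem (hc.mem t)).2.2))
    rw [← r1] at x1
    rw [← r2] at x2
    have x1' := congrArg conj x1
    simp only [map_add, map_sub, map_mul, map_pow, Complex.conj_conj, Complex.conj_ofReal,
      map_ofNat] at x1'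
    set m : ℂ := (norm3 (deriv γ s) : ℂ) with hm
    set p' := deriv (fun s => c s 0 0) s
    set q' := deriv (fun s => c s 1 0) s
    have hP : conj (c s 0 0) * (c s 0 0 * q' - c s 1 0 * p') = m / 2 * conj (c s 0 0) := by
      linear_combination c s 0 0 / 2 * x1 - c s 1 0 / 2 * (x2 + x3) + m / 2 * conj (c s 0 0) * u
    have hQ : conj (c s 1 0) * (c s 0 0 * q' - c s 1 0 * p') = m / 2 * conj (c s 1 0) := by
      linear_combination c s 0 0 / 2 * (x3 - x2) - c s 1 0 / 2 * x1' +
        m / 2 * conj (c s 1 0) * u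
    push_cast
    linear_combination c s 0 0 * hP + c s 1 0 * hQ -
      (c s 0 0 * q' - c s 1 0 * p' - m / 2) * u

theorem eq_iff (hreg : IsRegularCurve γ) (hc : IsLift γ c) {s u : ℝ} :
    γ s = γ u ↔ relOff (fun s => c s 0 0) (fun s => c s 1 0) s u = 0 := by
  obtain ⟨r1, r2, -⟩ := hc.relations s
  obtain ⟨t1, t2, -⟩ := hc.relations u
  have us := (entries_of_mem (hc.mem s)).2.2
  have uu := (entries_of_mem (hc.mem u)).2.2
  constructor
  · intro h
    simp only [relOff]
    rw [h, ← t1] at r1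
    rw [h, ← t2] at r2
    have r1' := congrArg conj r1
    simp only [map_mul, Complex.conj_conj, map_ofNat] at r1'
    have hP : conj (c u 0 0) * (c s 0 0 * c u 1 0 - c s 1 0 * c u 0 0) = 0 := by
      linear_combination -c s 0 0 / 2 * r1 + c s 1 0 / 2 * (r2 + us - uu)
    have hQ : conj (c u 1 0) * (c s 0 0 * c u 1 0 - c s 1 0 * c u 0 0) = 0 := by
      linear_combination -c s 0 0 / 2 * (us - uu - r2) + c s 1 0 / 2 * r1'
    linear_combination c u 0 0 * hP + c u 1 0 * hQ -
      (c s 0 0 * c u 1 0 - c s 1 0 * c u 0 0) * uu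
  · intro h
    have hS := hc.isSpinor hreg
    have e1 := hS.fst_eq h
    have e2 := hS.snd_eq h
    have e3 := hS.rel_unit s u
    rw [h, mul_zero, add_zero] at e3
    rw [e1, e2, map_mul] at t1 t2
    rw [map_mul] at t2
    have z1 : (γ s 0 : ℂ) - γ s 1 * Complex.I = γ u 0 - γ u 1 * Complex.I := by
      rw [← r1, ← t1]
      linear_combination (-2 * conj (c s 0 0) * c s 1 0) * e3
    have z2 : (γ s 2 : ℂ) = γ u 2 := by
      rw [← r2, ← t2]
      linear_combination (-(conj (c s 0 0) * c s 0 0 - conj (c s 1 0) * c s 1 0)) * e3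
    have z0 := congrArg Complex.re z1
    have z1' := congrArg Complex.im z1
    simp at z0 z1'
    ext i
    fin_cases i
    · exact z0
    · exact z1'
    · exact_mod_cast z2

theorem relDiag_sq_im_ne_zero (hreg : IsRegularCurve γ) (hc : IsLift γ c) {s u : ℝ}
    (h : relOff (fun s => c s 0 0) (fun s => c s 1 0) s u = 0)
    (hli : LinearIndependent ℝ ![deriv γ s, deriv γ u]) :
    (relDiag (fun s => c s 0 0) (fun s => c s 1 0) s u ^ 2).im ≠ 0 := by
  intro him
  have hS := hc.isSpinor hreg
  have e1 := hS.fst_eq h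
  have e2 := hS.snd_eq h
  set α := relDiag (fun s => c s 0 0) (fun s => c s 1 0) s u
  obtain ⟨r1, r2⟩ := hc.relations_deriv hreg s
  obtain ⟨t1, t2⟩ := hc.relations_deriv hreg u
  have hα : α ^ 2 = ((α ^ 2).re : ℂ) := Complex.ext (by simp) (by simpa using him)
  have hα' : conj α ^ 2 = ((α ^ 2).re : ℂ) := by
    rw [← map_pow, hα, Complex.conj_ofReal, Complex.ofReal_re]
  set e := (α ^ 2).re
  set m := norm3 (deriv γ s) with hm
  set n := norm3 (deriv γ u) with hn
  rw [e1, e2] at t1 t2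
  simp only [map_mul] at t1 t2
  have z1 : (m : ℂ) * (deriv γ u 0 - deriv γ u 1 * Complex.I) =
      n * e * (deriv γ s 0 - deriv γ s 1 * Complex.I) := by
    rw [← r1, ← t1]
    linear_combination (m * n * conj (c s 0 0) ^ 2) * hα' - (m * n * c s 1 0 ^ 2) * hα
  have z2 : (m : ℂ) * deriv γ u 2 = n * e * deriv γ s 2 := by
    rw [← r2, ← t2]
    linear_combination (-m * n * conj (c s 0 0) * conj (c s 1 0)) * hα' -
      (m * n * c s 0 0 * c s 1 0) * hα
  have z0 := congrArg Complex.re z1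
  have z1' := congrArg Complex.im z1
  simp at z0 z1'
  have z2' : m * deriv γ u 2 = n * e * deriv γ s 2 := by exact_mod_cast z2
  have := (LinearIndependent.pair_iff.1 hli (n * e) (-m) (by
    ext i
    fin_cases i <;> simp <;> linarith)).2
  linarith [hreg.norm3_deriv_pos s]

theorem relDiag_sq_eq_one (hreg : IsRegularCurve γ) (hc : IsLift γ c) {l : ℝ}
    (hper : HasPeriod γ l) (s : ℝ) :
    relDiag (fun s => c s 0 0) (fun s => c s 1 0) s (s + l) ^ 2 = 1 := by
  have h := (hc.eq_iff hreg).1 (hper.2 s).symm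
  have hS := hc.isSpinor hreg
  have e1 := hS.fst_eq h
  have e2 := hS.snd_eq h
  set α := relDiag (fun s => c s 0 0) (fun s => c s 1 0) s (s + l)
  have hd : deriv γ (s + l) = deriv γ s := by
    rw [← deriv_comp_add_const, show (fun x => γ (x + l)) = γ from funext hper.2]
  obtain ⟨r1, r2⟩ := hc.relations_deriv hreg s
  obtain ⟨t1, t2⟩ := hc.relations_deriv hreg (s + l)
  have hm : (norm3 (deriv γ s) : ℂ) ≠ 0 := by exact_mod_cast (hreg.norm3_deriv_pos s).ne'
  rw [hd, e1, e2, ← r1] at t1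
  rw [hd, e1, e2, ← r2] at t2
  replace t1 := mul_left_cancel₀ hm t1
  replace t2 := mul_left_cancel₀ hm (neg_injective t2)
  simp only [map_mul] at t1 t2
  have us := (entries_of_mem (hc.mem s)).2.2
  set p := c s 0 0
  set q := c s 1 0
  have hq : q * (α ^ 2 - 1) = 0 := by
    linear_combination conj p * t2 - conj q * t1 - q * (α ^ 2 - 1) * us
  have hp : conj p * (conj α ^ 2 - 1) = 0 := by
    linear_combination q * t2 + p * t1 - conj p * (conj α ^ 2 - 1) * us
  have hp' := congrArg conj hp
  simp only [map_mul, map_sub, map_pow, map_one, map_zero, Complex.conj_conj] at hp'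
  linear_combination conj p * hp' + conj q * hq - (α ^ 2 - 1) * us

theorem exists_crossing (hreg : IsRegularCurve γ) (hc : IsLift γ c) {l : ℝ}
    (hper : HasPeriod γ l) (hgen : IsGeneric γ l) (hcr : crossings γ l = 1) :
    ∃ a b : ℝ, a < b ∧ relOff (fun s => c s 0 0) (fun s => c s 1 0) a b = 0 ∧
      (relDiag (fun s => c s 0 0) (fun s => c s 1 0) a b ^ 2).im ≠ 0 ∧
      (∀ s u, relOff (fun s => c s 0 0) (fun s => c s 1 0) s u = 0 →
        (∃ n : ℤ, u = s + n * l) ∨ (∃ m n : ℤ, s = a + m * l ∧ u = b + n * l) ∨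
          ∃ m n : ℤ, s = b + m * l ∧ u = a + n * l) ∧
      ∀ s u, a ≤ s → s < u → u ≤ b →
        relOff (fun s => c s 0 0) (fun s => c s 1 0) s u = 0 → s = a ∧ u = b := by
  obtain ⟨P, hP⟩ := Set.ncard_eq_one.1 hcr
  have hPm : P ∈ {p : R3 | ∃ s t : ℝ, γ s = p ∧ γ t = p ∧ ¬∃ k : ℤ, s - t = k * l} := by
    rw [hP]; rfl
  obtain ⟨a, t, ha, ht, hat⟩ := hPm
  have hpz (x : ℝ) (n : ℤ) : γ (x + n * l) = γ x := by
    simpa using (Function.Periodic.int_mul hper.2 n) x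
  obtain ⟨n, hn, -⟩ := existsUnique_add_zsmul_mem_Ico hper.1 t a
  rw [zsmul_eq_mul] at hn
  set b := t + n * l with hb
  have hγb : γ b = P := by rw [hb, hpz, ht]
  have hab' : ¬∃ k : ℤ, a - b = k * l := by
    rintro ⟨k, hk⟩
    exact hat ⟨k + n, by push_cast; linarith⟩
  have hab : a < b := lt_of_le_of_ne hn.1 fun h => hab' ⟨0, by simp [← h]⟩
  obtain ⟨hli, hg⟩ := hgen a b (ha.trans hγb.symm) hab'
  have h0 := (hc.eq_iff hreg).1 (ha.trans hγb.symm)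
  have hz : ∀ s u, relOff (fun s => c s 0 0) (fun s => c s 1 0) s u = 0 →
      (∃ n : ℤ, u = s + n * l) ∨ (∃ m n : ℤ, s = a + m * l ∧ u = b + n * l) ∨
        ∃ m n : ℤ, s = b + m * l ∧ u = a + n * l := by
    intro s u hsu
    by_cases hk : ∃ n : ℤ, u = s + n * l
    · exact Or.inl hk
    have hγ := (hc.eq_iff hreg).2 hsu
    have hs : γ s = P := by
      have : γ s ∈ ({P} : Set R3) := by
        rw [← hP]
        exact ⟨s, u, rfl, hγ.symm, fun ⟨k, hk'⟩ => hk ⟨-k, by push_cast; linarith⟩⟩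
      exact this
    rcases hg s (hs.trans ha.symm) with ⟨m, hm⟩ | ⟨m, hm⟩ <;>
      rcases hg u (hγ.symm.trans (hs.trans ha.symm)) with ⟨n, hn⟩ | ⟨n, hn⟩
    · exact absurd ⟨n - m, by push_cast; linarith⟩ hk
    · exact Or.inr (Or.inl ⟨m, n, by linarith, by linarith⟩)
    · exact Or.inr (Or.inr ⟨m, n, by linarith, by linarith⟩)
    · exact absurd ⟨n - m, by push_cast; linarith⟩ hk
  refine ⟨a, b, hab, h0, hc.relDiag_sq_im_ne_zero hreg h0 hli, hz, fun s u h1 h2 h3 h4 => ?_⟩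
  have hl := hper.1
  have key (k : ℤ) (x : ℝ) (hx : x = k * l) (h1 : -l < x) (h2 : x < l) : k = 0 := by
    have h3 : (-1 : ℝ) < k := by by_contra! h; nlinarith
    have h4 : (k : ℝ) < 1 := by by_contra! h; nlinarith
    have h3' : (-1 : ℤ) < k := by exact_mod_cast h3
    have h4' : k < 1 := by exact_mod_cast h4
    omega
  rcases hz s u h4 with ⟨k, hk⟩ | ⟨m, k, hs, hu⟩ | ⟨m, k, hs, hu⟩
  · have := key k (u - s) (by linarith) (by linarith) (by linarith [hn.2])
    rw [this] at hk
    simp at hk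
    linarith
  · have hm := key m (s - a) (by linarith) (by linarith) (by linarith [hn.2])
    have hk := key k (u - b) (by linarith) (by linarith [hn.2]) (by linarith)
    subst hm hk
    simp at hs hu
    exact ⟨hs, hu⟩
  · have hk := key k (u - a) (by linarith) (by linarith) (by linarith [hn.2])
    subst hk
    simp at hu
    linarith

end IsLift

theorem star_mul_eq_of_mem {A B : Mat2} (hA : A ∈ Matrix.specialUnitaryGroup (Fin 2) ℂ)
    (hB : B ∈ Matrix.specialUnitaryGroup (Fin 2) ℂ) :
    star A * B = !![conj (A 0 0) * B 0 0 + conj (A 1 0) * B 1 0,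
        -conj (A 0 0 * B 1 0 - A 1 0 * B 0 0);
      A 0 0 * B 1 0 - A 1 0 * B 0 0,
        conj (conj (A 0 0) * B 0 0 + conj (A 1 0) * B 1 0)] := by
  obtain ⟨a1, a2, -⟩ := entries_of_mem hA
  obtain ⟨b1, b2, -⟩ := entries_of_mem hB
  ext i j
  fin_cases i <;> fin_cases j <;>
    simp [Matrix.mul_apply, Fin.sum_univ_two, a1, a2, b1, b2] <;> ring

/-- Opposite relative frames yield antipodal points in the image of `fmap`. -/
theorem fmap_eq_neg {γ1 γ2 : ℝ → R3} {c1 c2 : ℝ → Mat2} (hc1 : IsLift γ1 c1)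
    (hc2 : IsLift γ2 c2) {s1 u1 s2 u2 : ℝ}
    (hd : relDiag (fun s => c1 s 0 0) (fun s => c1 s 1 0) s1 u1 =
      -relDiag (fun s => c2 s 0 0) (fun s => c2 s 1 0) s2 u2)
    (ho : relOff (fun s => c1 s 0 0) (fun s => c1 s 1 0) s1 u1 =
      -relOff (fun s => c2 s 0 0) (fun s => c2 s 1 0) s2 u2) :
    fmap c1 c2 u1 u2 = -fmap c1 c2 s1 s2 := by
  have h : star (c1 s1) * c1 u1 = -(star (c2 s2) * c2 u2) := by
    rw [star_mul_eq_of_mem (hc1.mem _) (hc1.mem _), star_mul_eq_of_mem (hc2.mem _) (hc2.mem _)]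
    simp only [relDiag, relOff] at hd ho
    rw [hd, ho]
    ext i j
    fin_cases i <;> fin_cases j <;> simp
  have hu (s : ℝ) : c1 s * star (c1 s) = 1 :=
    Matrix.mem_unitaryGroup_iff.1 (Matrix.mem_specialUnitaryGroup_iff.1 (hc1.mem s)).1
  have hv (s : ℝ) : c2 s * star (c2 s) = 1 :=
    Matrix.mem_unitaryGroup_iff.1 (Matrix.mem_specialUnitaryGroup_iff.1 (hc2.mem s)).1
  have h' : c1 u1 * star (c2 u2) = -(c1 s1 * star (c2 s2)) := by
    calc c1 u1 * star (c2 u2) = c1 s1 * star (c1 s1) * c1 u1 * star (c2 u2) := by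
          rw [hu, one_mul]
      _ = c1 s1 * (star (c1 s1) * c1 u1) * star (c2 u2) := by simp only [mul_assoc]
      _ = -(c1 s1 * star (c2 s2) * (c2 u2 * star (c2 u2))) := by
          rw [h]; simp only [mul_neg, neg_mul, mul_assoc]
      _ = -(c1 s1 * star (c2 s2)) := by rw [hv, mul_one]
  rw [fmap, fmap, inv_eq_star (hc2.mem _), inv_eq_star (hc2.mem _),
    mul_assoc (c1 0)⁻¹ (c1 u1), h', mul_assoc (c1 0)⁻¹ (c1 s1), mul_neg, neg_mul]

theorem extDiam_eq_pi {γ1 γ2 : ℝ → R3} {c1 c2 : ℝ → Mat2} (hc1 : IsLift γ1 c1)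
    (hc2 : IsLift γ2 c2)
    (h : ∃ s1 s2 u1 u2 : ℝ, fmap c1 c2 u1 u2 = -fmap c1 c2 s1 s2) :
    extDiam c1 c2 = Real.pi := by
  refine IsGreatest.csSup_eq ⟨?_, ?_⟩
  · obtain ⟨s1, s2, u1, u2, h⟩ := h
    refine ⟨s1, s2, u1, u2, ?_⟩
    have hU : fmap c1 c2 s1 s2 ∈ Matrix.unitaryGroup (Fin 2) ℂ := by
      have m1 (s : ℝ) := (Matrix.mem_specialUnitaryGroup_iff.1 (hc1.mem s)).1
      have m2 (s : ℝ) := (Matrix.mem_specialUnitaryGroup_iff.1 (hc2.mem s)).1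
      rw [fmap, inv_eq_star (hc1.mem _), inv_eq_star (hc2.mem _)]
      exact mul_mem (mul_mem (mul_mem (Unitary.star_mem (m1 _)) (m1 _))
        (Unitary.star_mem (m2 _))) (m2 _)
    have h1 : fmap c1 c2 s1 s2 * (fmap c1 c2 s1 s2)ᴴ = 1 := Matrix.mem_unitaryGroup_iff.1 hU
    rw [distS3, h, Matrix.conjTranspose_neg, mul_neg, h1, Matrix.trace_neg, Matrix.trace_one]
    simp
  · rintro d ⟨s1, s2, u1, u2, rfl⟩
    exact Real.arccos_le_pi _

theorem exists_fmap_eq_neg {γ1 γ2 : ℝ → R3} {l1 l2 : ℝ} {c1 c2 : ℝ → Mat2}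
    (hreg1 : IsRegularCurve γ1) (hreg2 : IsRegularCurve γ2)
    (hper1 : HasPeriod γ1 l1) (hper2 : HasPeriod γ2 l2)
    (hgen1 : IsGeneric γ1 l1) (hgen2 : IsGeneric γ2 l2)
    (hc1 : IsLift γ1 c1) (hc2 : IsLift γ2 c2)
    (hcr1 : crossings γ1 l1 = 1) (hcr2 : crossings γ2 l2 = 1) :
    ∃ s1 s2 u1 u2 : ℝ, fmap c1 c2 u1 u2 = -fmap c1 c2 s1 s2 := by
  by_contra hno
  obtain ⟨a1, b1, hab1, h01, him1, hz1, hinj1⟩ := hc1.exists_crossing hreg1 hper1 hgen1 hcr1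
  obtain ⟨a2, b2, hab2, h02, him2, hz2, hinj2⟩ := hc2.exists_crossing hreg2 hper2 hgen2 hcr2
  have hS1 := hc1.isSpinor hreg1
  have hS2 := hc2.isSpinor hreg2
  have havoid (s u s' u' : ℝ) :
      ¬(relDiag (fun s => c1 s 0 0) (fun s => c1 s 1 0) s u =
          -relDiag (fun s => c2 s 0 0) (fun s => c2 s 1 0) s' u' ∧
        relOff (fun s => c1 s 0 0) (fun s => c1 s 1 0) s u =
          -relOff (fun s => c2 s 0 0) (fun s => c2 s 1 0) s' u') :=
    fun ⟨hd, ho⟩ => hno ⟨s, s', u, u', fmap_eq_neg hc1 hc2 hd ho⟩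
  have hre1 := hS1.relDiag_re_neg hab1 hinj1 h01 him1
  have hre2 := hS2.relDiag_re_neg hab2 hinj2 h02 him2
  have hper_eq (s : ℝ) := (hc1.eq_iff hreg1).1 (hper1.2 s).symm
  have hsq := hc1.relDiag_sq_eq_one hreg1 hper1
  set p1 : ℝ → ℂ := fun s => c1 s 0 0
  set q1 : ℝ → ℂ := fun s => c1 s 1 0
  set p2 : ℝ → ℂ := fun s => c2 s 0 0
  set q2 : ℝ → ℂ := fun s => c2 s 1 0
  have hαper (s : ℝ) : relDiag p1 q1 s (s + l1) = 1 := by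
    rcases mul_self_eq_one_iff.1 ((sq _).symm.trans (hsq s)) with h | h
    · exact h
    · refine absurd ⟨?_, ?_⟩ (havoid s (s + l1) 0 0)
      · rw [hS2.relDiag_self, h]
      · rw [IsSpinor.relOff_self, hper_eq, neg_zero]
  have hp : Function.Periodic p1 l1 := fun s => by
    rw [hS1.fst_eq (hper_eq s), hαper, mul_one]
  have hq : Function.Periodic q1 l1 := fun s => by
    rw [hS1.snd_eq (hper_eq s), hαper, mul_one]
  have hre (s u : ℝ) : (relDiag p1 q1 s u).re ≠ -1 := by
    intro h
    have hu := hS1.rel_unit s u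
    have hu' := congrArg Complex.re hu
    simp [Complex.mul_re] at hu'
    have hi : (relDiag p1 q1 s u).im = 0 := by
      nlinarith [sq_nonneg (relOff p1 q1 s u).re, sq_nonneg (relOff p1 q1 s u).im]
    have hd : relDiag p1 q1 s u = -1 := Complex.ext (by simpa using h) (by simpa using hi)
    rw [hd] at hu
    have ho : relOff p1 q1 s u = 0 := by simpa using hu
    exact havoid s u 0 0 ⟨by rw [hS2.relDiag_self, hd],
      by rw [IsSpinor.relOff_self, ho, neg_zero]⟩
  have sq_im (z : ℂ) : (z ^ 2).im = 2 * z.re * z.im := by simp [sq, Complex.mul_im]; ring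
  have him1' : (relDiag p1 q1 a1 b1).im ≠ 0 := fun h => him1 (by rw [sq_im, h, mul_zero])
  have him2' : (relDiag p2 q2 a2 b2).im ≠ 0 := fun h => him2 (by rw [sq_im, h, mul_zero])
  obtain ⟨c, d, h0, him, hneg, hzero⟩ : ∃ c d : ℝ, relOff p1 q1 c d = 0 ∧
      0 < (relDiag p1 q1 c d).im ∧ (relDiag p1 q1 c d).re < 0 ∧
      ∀ s u, relOff p1 q1 s u = 0 → (∃ n : ℤ, u = s + n * l1) ∨
        (∃ m n : ℤ, s = c + m * l1 ∧ u = d + n * l1) ∨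
          ∃ m n : ℤ, s = d + m * l1 ∧ u = c + n * l1 := by
    rcases him1'.lt_or_gt with h | h
    · refine ⟨b1, a1, by rw [relOff_swap, h01, neg_zero], ?_, ?_, fun s u hsu => ?_⟩
      · rw [relDiag_swap, Complex.conj_im]; linarith
      · rwa [relDiag_swap, Complex.conj_re]
      · exact (hz1 s u hsu).imp_right Or.symm
    · exact ⟨a1, b1, h01, h, hre1, hz1⟩
  have hcd : Continuous fun u => relDiag p2 q2 a2 u :=
    hS2.continuous_relDiag.comp (by fun_prop : Continuous fun u : ℝ => (a2, u))
  have hco : Continuous fun u => relOff p2 q2 a2 u :=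
    hS2.continuous_relOff.comp (by fun_prop : Continuous fun u : ℝ => (a2, u))
  have hone (u : ℝ) (hu : u ∈ Ioc a2 b2) : relDiag p2 q2 a2 u ≠ 1 := by
    intro h
    have hu' := hS2.rel_unit a2 u
    rw [h] at hu'
    have ho : relOff p2 q2 a2 u = 0 := by simpa using hu'
    obtain ⟨-, rfl⟩ := hinj2 a2 u le_rfl hu.1 hu.2 ho
    exact him2' (by rw [h, Complex.one_im])
  rcases him2'.lt_or_gt with h | h
  · exact hS1.not_avoids_path hper1.1 hp hq h0 him hneg hzero hre hab2 hcd hco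
      (fun u => hS2.rel_unit a2 u) (hS2.relDiag_self a2) hone h02 hre2 h
      fun s u v _ => havoid s u a2 v
  · refine hS1.not_avoids_path (A := fun u => relDiag p2 q2 u a2)
      (B := fun u => relOff p2 q2 u a2) hper1.1 hp hq h0 him hneg hzero hre hab2 ?_ ?_
      (fun u => hS2.rel_unit u a2) (hS2.relDiag_self a2) ?_ ?_ ?_ ?_
      fun s u v _ => havoid s u v a2
    · exact hS2.continuous_relDiag.comp (by fun_prop : Continuous fun u : ℝ => (u, a2))
    · exact hS2.continuous_relOff.comp (by fun_prop : Continuous fun u : ℝ => (u, a2))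
    · intro u hu h1
      refine hone u hu ?_
      rw [relDiag_swap, h1, map_one]
    · simp only [relOff_swap p2 q2 a2 b2, h02, neg_zero]
    · simp only [relDiag_swap p2 q2 a2 b2, Complex.conj_re, hre2]
    · simp only [relDiag_swap p2 q2 a2 b2, Complex.conj_im]; linarith

end

/-- Proposition A -/
theorem stmt13 (μ : ℝ) (γ1 γ2 : ℝ → R3) (l1 l2 : ℝ) (c1 c2 : ℝ → Mat2)
    (hμ : 0 < μ)
    (hreg1 : IsRegularCurve γ1) (hreg2 : IsRegularCurve γ2)
    (hper1 : HasPeriod γ1 l1) (hper2 : HasPeriod γ2 l2)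
    (hadm1 : ∀ s, μ < kappa γ1 s) (hadm2 : ∀ s, kappa γ2 s < μ)
    (hpar1 : ∀ s, norm3 (deriv γ1 s) ^ 2 * (1 + kappa γ1 s ^ 2) = 4)
    (hpar2 : ∀ s, norm3 (deriv γ2 s) ^ 2 * (1 + kappa γ2 s ^ 2) = 4)
    (hgen1 : IsGeneric γ1 l1) (hgen2 : IsGeneric γ2 l2)
    (hc1 : IsLift γ1 c1) (hc2 : IsLift γ2 c2)
    (hcr1 : crossings γ1 l1 = 1) (hcr2 : crossings γ2 l2 = 1) :
    (∃ s1 s2 u1 u2 : ℝ, fmap c1 c2 u1 u2 = -fmap c1 c2 s1 s2) ∧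
    extDiam c1 c2 = Real.pi := by
  have h := exists_fmap_eq_neg hreg1 hreg2 hper1 hper2 hgen1 hgen2 hc1 hc2 hcr1 hcr2
  exact ⟨h, extDiam_eq_pi hc1 hc2 h⟩
end
end

section
/- Let (γ₁,γ₂) be an admissible pair of regular curves in S² admitting lifts, and suppose there exists θ with 0 < θ < π such that κ₁(s₁) > cot θ > κ₂(s₂) for all s₁, s₂ ∈ ℝ. Define γ̄₁(s) := γ₁^θ(s) and γ̄₂(s) := γ₂^θ(−s). Then: (1) (γ̄₁,γ̄₂) is an admissible pair whose geodesic curvatures satisfy κ̄₁(s₁) > cot θ > κ̄₂(s₂) for all s₁, s₂; (2) there exists a ∈ SU(2) such that f_{γ̄₁,γ̄₂}(s₁,s₂) = a f_{γ₁,γ₂}(s₁,−s₂) a⁻¹ for all (s₁,s₂); (3) the mean curvature functions H(s₁,s₂) := (1+κ₁(s₁)κ₂(s₂))/(κ₁(s₁)−κ₂(s₂)) and H̄(s₁,s₂) := (1+κ̄₁(s₁)κ̄₂(s₂))/(κ̄₁(s₁)−κ̄₂(s₂)) satisfy H̄(s₁,s₂) = −H(s₁,−s₂). -/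
noncomputable section

open Matrix

/-! ### Algebra of `dot3` and `cross3` -/

lemma dot3_self_nonneg (a : R3) : 0 ≤ dot3 a a := by
  unfold dot3; nlinarith [mul_self_nonneg (a 0), mul_self_nonneg (a 1), mul_self_nonneg (a 2)]

lemma dot3_self_pos {a : R3} (ha : a ≠ 0) : 0 < dot3 a a := by
  refine lt_of_le_of_ne (dot3_self_nonneg a) fun h => ha ?_
  unfold dot3 at h
  have h0 : a 0 = 0 := by
    nlinarith [mul_self_nonneg (a 0), mul_self_nonneg (a 1), mul_self_nonneg (a 2)]
  have h1 : a 1 = 0 := by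
    nlinarith [mul_self_nonneg (a 0), mul_self_nonneg (a 1), mul_self_nonneg (a 2)]
  have h2 : a 2 = 0 := by
    nlinarith [mul_self_nonneg (a 0), mul_self_nonneg (a 1), mul_self_nonneg (a 2)]
  ext i; fin_cases i <;> assumption

lemma norm3_pos {a : R3} (ha : a ≠ 0) : 0 < norm3 a := Real.sqrt_pos.2 (dot3_self_pos ha)

lemma norm3_sq (a : R3) : norm3 a ^ 2 = dot3 a a := Real.sq_sqrt (dot3_self_nonneg a)

lemma norm3_smul_of_nonneg {r : ℝ} (hr : 0 ≤ r) {a : R3} (ha : dot3 a a = 1) :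
    norm3 (r • a) = r := by
  have h : dot3 (r • a) (r • a) = r ^ 2 := by
    simp only [dot3, Pi.smul_apply, smul_eq_mul] at ha ⊢; linear_combination r ^ 2 * ha
  rw [norm3, h, Real.sqrt_sq hr]

lemma dot3_comm (a b : R3) : dot3 a b = dot3 b a := by unfold dot3; ring

lemma dot3_cross3_self_left (a b : R3) : dot3 a (cross3 a b) = 0 := by
  simp [dot3, cross3]; ring

lemma dot3_cross3_cross3 {a b : R3} (ha : dot3 a a = 1) (hb : dot3 b b = 1) (hab : dot3 a b = 0) :
    dot3 (cross3 a b) (cross3 a b) = 1 := by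
  have h : dot3 (cross3 a b) (cross3 a b) = dot3 a a * dot3 b b - dot3 a b ^ 2 := by
    simp [dot3, cross3]; ring
  rw [h, ha, hb, hab]; norm_num

lemma cross3_cross3_left {a b : R3} (ha : dot3 a a = 1) (hab : dot3 a b = 0) :
    cross3 a (cross3 a b) = -b := by
  have h : cross3 a (cross3 a b) = dot3 a b • a - dot3 a a • b := by
    ext i; fin_cases i <;> simp [dot3, cross3] <;> ring
  rw [h, ha, hab]; simp

lemma cross3_cross3_right {a b : R3} (hb : dot3 b b = 1) (hab : dot3 a b = 0) :
    cross3 (cross3 a b) b = -a := by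
  have h : cross3 (cross3 a b) b = dot3 a b • b - dot3 b b • a := by
    ext i; fin_cases i <;> simp [dot3, cross3] <;> ring
  rw [h, hb, hab]; simp

/-- Expansion of a vector in the orthonormal basis `a, b, a × b`. -/
lemma orthonormal_expansion {a b : R3} (ha : dot3 a a = 1) (hb : dot3 b b = 1)
    (hab : dot3 a b = 0) (v : R3) :
    v = dot3 v a • a + dot3 v b • b + dot3 v (cross3 a b) • cross3 a b := by
  have h : (dot3 a a * dot3 b b - dot3 a b ^ 2) • v =
      (dot3 v a * dot3 b b - dot3 v b * dot3 a b) • a +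
      (dot3 v b * dot3 a a - dot3 v a * dot3 a b) • b +
      dot3 v (cross3 a b) • cross3 a b := by
    ext i; fin_cases i <;> simp [dot3, cross3] <;> ring
  rw [ha, hb, hab] at h
  simpa using h

/-! ### Calculus of `dot3` and `cross3` -/

lemma HasDerivAt.dot3 {f g : ℝ → R3} {f' g' : R3} {s : ℝ} (hf : HasDerivAt f f' s)
    (hg : HasDerivAt g g' s) :
    HasDerivAt (fun t => dot3 (f t) (g t)) (dot3 f' (g s) + dot3 (f s) g') s := by
  have hf := hasDerivAt_pi.1 hf
  have hg := hasDerivAt_pi.1 hg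
  refine ((((hf 0).fun_mul (hg 0)).fun_add ((hf 1).fun_mul (hg 1))).fun_add
    ((hf 2).fun_mul (hg 2))).congr_deriv ?_
  simp only [_root_.dot3]; ring

lemma HasDerivAt.cross3 {f g : ℝ → R3} {f' g' : R3} {s : ℝ} (hf : HasDerivAt f f' s)
    (hg : HasDerivAt g g' s) :
    HasDerivAt (fun t => cross3 (f t) (g t)) (cross3 f' (g s) + cross3 (f s) g') s := by
  have hf := hasDerivAt_pi.1 hf
  have hg := hasDerivAt_pi.1 hg
  refine hasDerivAt_pi.2 fun i => ?_
  fin_cases i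
  · refine (((hf 1).fun_mul (hg 2)).fun_sub ((hf 2).fun_mul (hg 1))).congr_deriv ?_
    simp [_root_.cross3]; ring
  · refine (((hf 2).fun_mul (hg 0)).fun_sub ((hf 0).fun_mul (hg 2))).congr_deriv ?_
    simp [_root_.cross3]; ring
  · refine (((hf 0).fun_mul (hg 1)).fun_sub ((hf 1).fun_mul (hg 0))).congr_deriv ?_
    simp [_root_.cross3]; ring

lemma ContDiff.dot3 {f g : ℝ → R3} {k : WithTop ℕ∞} (hf : ContDiff ℝ k f) (hg : ContDiff ℝ k g) :
    ContDiff ℝ k fun t => dot3 (f t) (g t) := by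
  have hf := contDiff_pi.1 hf
  have hg := contDiff_pi.1 hg
  exact (((hf 0).mul (hg 0)).add ((hf 1).mul (hg 1))).add ((hf 2).mul (hg 2))

lemma ContDiff.cross3 {f g : ℝ → R3} {k : WithTop ℕ∞} (hf : ContDiff ℝ k f)
    (hg : ContDiff ℝ k g) : ContDiff ℝ k fun t => cross3 (f t) (g t) := by
  have hf := contDiff_pi.1 hf
  have hg := contDiff_pi.1 hg
  refine contDiff_pi.2 fun i => ?_
  fin_cases i
  · exact ((hf 1).mul (hg 2)).sub ((hf 2).mul (hg 1))
  · exact ((hf 2).mul (hg 0)).sub ((hf 0).mul (hg 2))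
  · exact ((hf 0).mul (hg 1)).sub ((hf 1).mul (hg 0))

/-! ### The Frenet equations of a regular spherical curve -/

/-- The unit tangent vector of a curve. -/
def unitTangent (γ : ℝ → R3) (s : ℝ) : R3 := (norm3 (deriv γ s))⁻¹ • deriv γ s

namespace IsRegularCurve

variable {γ : ℝ → R3}

lemma speed_pos (h : IsRegularCurve γ) (s : ℝ) : 0 < norm3 (deriv γ s) := norm3_pos (h.reg s)

lemma deriv_eq (h : IsRegularCurve γ) (s : ℝ) :
    deriv γ s = norm3 (deriv γ s) • unitTangent γ s := by
  rw [unitTangent, smul_smul, mul_inv_cancel₀ (h.speed_pos s).ne', one_smul]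

lemma hasDerivAt (h : IsRegularCurve γ) (s : ℝ) :
    HasDerivAt γ (norm3 (deriv γ s) • unitTangent γ s) s := by
  rw [← h.deriv_eq]
  exact (h.smooth.differentiable (by simp) s).hasDerivAt

lemma contDiff_deriv (h : IsRegularCurve γ) : ContDiff ℝ (⊤ : ℕ∞) (deriv γ) :=
  (contDiff_infty_iff_deriv.1 h.smooth).2

lemma contDiff_speed (h : IsRegularCurve γ) :
    ContDiff ℝ (⊤ : ℕ∞) fun s => norm3 (deriv γ s) :=
  (h.contDiff_deriv.dot3 h.contDiff_deriv).sqrt fun s => (dot3_self_pos (h.reg s)).ne'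

lemma contDiff_unitTangent (h : IsRegularCurve γ) : ContDiff ℝ (⊤ : ℕ∞) (unitTangent γ) :=
  (h.contDiff_speed.inv fun s => (h.speed_pos s).ne').smul h.contDiff_deriv

lemma dot3_unitTangent_self (h : IsRegularCurve γ) (s : ℝ) :
    dot3 (unitTangent γ s) (unitTangent γ s) = 1 := by
  have hu := (h.speed_pos s).ne'
  have h2 := norm3_sq (deriv γ s)
  simp only [unitTangent, dot3, Pi.smul_apply, smul_eq_mul] at h2 ⊢
  field_simp
  linear_combination -h2

lemma dot3_unitTangent (h : IsRegularCurve γ) (s : ℝ) : dot3 (γ s) (unitTangent γ s) = 0 := by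
  have h1 := (h.hasDerivAt s).dot3 (h.hasDerivAt s)
  rw [funext h.sphere] at h1
  have h2 := h1.unique (hasDerivAt_const s 1)
  have hu := (h.speed_pos s).ne'
  refine mul_left_cancel₀ hu ?_
  simp only [dot3, Pi.smul_apply, smul_eq_mul] at h2 ⊢
  linear_combination h2 / 2

lemma unitNormal_eq (s : ℝ) : unitNormal γ s = cross3 (γ s) (unitTangent γ s) := by
  ext i; fin_cases i <;> simp [unitNormal, unitTangent, cross3] <;> ring

lemma contDiff_unitNormal (h : IsRegularCurve γ) : ContDiff ℝ (⊤ : ℕ∞) (unitNormal γ) := by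
  rw [funext fun s => unitNormal_eq (γ := γ) s]
  exact h.smooth.cross3 h.contDiff_unitTangent

lemma hasDerivAt_unitTangent (h : IsRegularCurve γ) (s : ℝ) :
    HasDerivAt (unitTangent γ)
      (norm3 (deriv γ s) • (kappa γ s • unitNormal γ s - γ s)) s := by
  have hu := (h.speed_pos s).ne'
  have hT := (h.contDiff_unitTangent.differentiable (by simp) s).hasDerivAt
  have hspeed := (h.contDiff_speed.differentiable (by simp) s).hasDerivAt
  have hTT := h.dot3_unitTangent_self s
  have hgT := h.dot3_unitTangent s
  have h2 : deriv (deriv γ) s = norm3 (deriv γ s) • deriv (unitTangent γ) s +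
      deriv (fun s => norm3 (deriv γ s)) s • unitTangent γ s := by
    exact (congrArg (fun f => deriv f s) (funext h.deriv_eq)).trans (hspeed.fun_smul hT).deriv
  have hκ : dot3 (deriv (unitTangent γ) s) (cross3 (γ s) (unitTangent γ s)) =
      norm3 (deriv γ s) * kappa γ s := by
    rw [kappa, h2]
    nth_rewrite 2 [h.deriv_eq]
    field_simp
    simp [det3, dot3, cross3]; ring
  have e1 : dot3 (deriv (unitTangent γ) s) (unitTangent γ s) = 0 := by
    have h1 := hT.dot3 hT
    rw [funext h.dot3_unitTangent_self] at h1
    have h2 := h1.unique (hasDerivAt_const s 1)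
    rw [dot3_comm (unitTangent γ s)] at h2
    linarith
  have e2 : dot3 (deriv (unitTangent γ) s) (γ s) = -norm3 (deriv γ s) := by
    have h1 := (h.hasDerivAt s).dot3 hT
    rw [funext h.dot3_unitTangent] at h1
    have h2 := h1.unique (hasDerivAt_const s 0)
    simp only [dot3, Pi.smul_apply, smul_eq_mul] at h2 hTT ⊢
    linear_combination h2 - norm3 (deriv γ s) * hTT
  refine hT.congr_deriv ?_
  rw [orthonormal_expansion (h.sphere s) hTT hgT (deriv (unitTangent γ) s), hκ, e1, e2,
    unitNormal_eq]
  module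

lemma hasDerivAt_unitNormal (h : IsRegularCurve γ) (s : ℝ) :
    HasDerivAt (unitNormal γ) (-(norm3 (deriv γ s) * kappa γ s) • unitTangent γ s) s := by
  rw [funext fun s => unitNormal_eq (γ := γ) s]
  refine ((h.hasDerivAt s).cross3 (h.hasDerivAt_unitTangent s)).congr_deriv ?_
  have e := cross3_cross3_left (h.sphere s) (h.dot3_unitTangent s)
  have e' : cross3 (γ s) (norm3 (deriv γ s) • (kappa γ s • unitNormal γ s - γ s)) =
      (norm3 (deriv γ s) * kappa γ s) • cross3 (γ s) (cross3 (γ s) (unitTangent γ s)) := by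
    rw [unitNormal_eq]
    ext i; fin_cases i <;> simp [cross3, vecHead, vecTail] <;> ring
  have e'' : cross3 (norm3 (deriv γ s) • unitTangent γ s) (unitTangent γ s) = 0 := by
    ext i; fin_cases i <;> simp [cross3] <;> ring
  rw [e', e'', e]; module

lemma hasDerivAt_parallelCurve (h : IsRegularCurve γ) (θ s : ℝ) :
    HasDerivAt (parallelCurve γ θ)
      ((norm3 (deriv γ s) * (Real.cos θ - kappa γ s * Real.sin θ)) • unitTangent γ s) s := by
  refine (((h.hasDerivAt s).const_smul (Real.cos θ)).add
    ((h.hasDerivAt_unitNormal s).const_smul (Real.sin θ))).congr_deriv ?_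
  module

lemma dot3_parallelCurve_self (h : IsRegularCurve γ) (θ s : ℝ) :
    dot3 (parallelCurve γ θ s) (parallelCurve γ θ s) = 1 := by
  have h1 := h.sphere s
  have h2 := dot3_cross3_self_left (γ s) (unitTangent γ s)
  have h3 := dot3_cross3_cross3 h1 (h.dot3_unitTangent_self s) (h.dot3_unitTangent s)
  rw [← unitNormal_eq] at h2 h3
  simp only [parallelCurve, dot3, Pi.add_apply, Pi.smul_apply, smul_eq_mul] at h1 h2 h3 ⊢
  linear_combination Real.cos θ ^ 2 * h1 + 2 * Real.cos θ * Real.sin θ * h2 +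
    Real.sin θ ^ 2 * h3 + Real.sin_sq_add_cos_sq θ

/-- `hasDerivAt_parallelCurve` for the curve `s ↦ γ^θ(σ s)`. -/
lemma hasDerivAt_parallelCurve_comp (h : IsRegularCurve γ) (θ σ s : ℝ) :
    HasDerivAt (fun t => parallelCurve γ θ (σ * t))
      ((norm3 (deriv γ (σ * s)) * (σ * (kappa γ (σ * s) * Real.sin θ - Real.cos θ))) •
        -unitTangent γ (σ * s)) s := by
  have h1 : HasDerivAt (fun t : ℝ => σ * t) σ s := by
    simpa using (hasDerivAt_id s).const_mul σ
  refine ((h.hasDerivAt_parallelCurve θ (σ * s)).scomp s h1).congr_deriv ?_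
  module

section Parallel

variable {θ σ : ℝ}

lemma norm3_deriv_parallelCurve (h : IsRegularCurve γ)
    (hpos : ∀ s, 0 < σ * (kappa γ s * Real.sin θ - Real.cos θ)) (s : ℝ) :
    norm3 (deriv (fun t => parallelCurve γ θ (σ * t)) s) =
      norm3 (deriv γ (σ * s)) * (σ * (kappa γ (σ * s) * Real.sin θ - Real.cos θ)) := by
  rw [(h.hasDerivAt_parallelCurve_comp θ σ s).deriv]
  refine norm3_smul_of_nonneg (mul_pos (h.speed_pos _) (hpos _)).le ?_
  have := h.dot3_unitTangent_self (σ * s)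
  simpa [dot3] using this

lemma unitTangent_parallelCurve (h : IsRegularCurve γ)
    (hpos : ∀ s, 0 < σ * (kappa γ s * Real.sin θ - Real.cos θ)) (s : ℝ) :
    unitTangent (fun t => parallelCurve γ θ (σ * t)) s = -unitTangent γ (σ * s) := by
  rw [unitTangent, h.norm3_deriv_parallelCurve hpos,
    (h.hasDerivAt_parallelCurve_comp θ σ s).deriv, smul_smul,
    inv_mul_cancel₀ (mul_pos (h.speed_pos _) (hpos _)).ne', one_smul]

lemma parallelCurve_comp (h : IsRegularCurve γ)
    (hpos : ∀ s, 0 < σ * (kappa γ s * Real.sin θ - Real.cos θ)) :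
    IsRegularCurve fun t => parallelCurve γ θ (σ * t) where
  smooth := by
    have h1 : ContDiff ℝ (⊤ : ℕ∞) (parallelCurve γ θ) :=
      (h.smooth.const_smul (Real.cos θ)).add (h.contDiff_unitNormal.const_smul (Real.sin θ))
    exact h1.comp (contDiff_const.mul contDiff_id)
  sphere s := h.dot3_parallelCurve_self θ (σ * s)
  reg s h0 := by
    have h1 := h.norm3_deriv_parallelCurve hpos s
    have h2 := mul_pos (h.speed_pos (σ * s)) (hpos (σ * s))
    rw [← h1, h0] at h2
    simp [norm3, dot3] at h2

lemma unitNormal_parallelCurve (h : IsRegularCurve γ)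
    (hpos : ∀ s, 0 < σ * (kappa γ s * Real.sin θ - Real.cos θ)) (s : ℝ) :
    unitNormal (fun t => parallelCurve γ θ (σ * t)) s =
      Real.sin θ • γ (σ * s) - Real.cos θ • unitNormal γ (σ * s) := by
  have e := cross3_cross3_right (h.dot3_unitTangent_self (σ * s)) (h.dot3_unitTangent (σ * s))
  rw [unitNormal_eq, h.unitTangent_parallelCurve hpos]
  have e' : cross3 (parallelCurve γ θ (σ * s)) (-unitTangent γ (σ * s)) =
      -(Real.sin θ • cross3 (cross3 (γ (σ * s)) (unitTangent γ (σ * s))) (unitTangent γ (σ * s))) -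
        Real.cos θ • unitNormal γ (σ * s) := by
    rw [parallelCurve, unitNormal_eq]
    ext i; fin_cases i <;> simp [cross3] <;> ring
  rw [e', e]; module

lemma kappa_parallelCurve (h : IsRegularCurve γ)
    (hpos : ∀ s, 0 < σ * (kappa γ s * Real.sin θ - Real.cos θ)) (s : ℝ) :
    kappa (fun t => parallelCurve γ θ (σ * t)) s =
      (Real.sin θ + kappa γ (σ * s) * Real.cos θ) /
        (kappa γ (σ * s) * Real.sin θ - Real.cos θ) := by
  have hσ : HasDerivAt (fun t : ℝ => σ * t) σ s := by
    simpa using (hasDerivAt_id s).const_mul σ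
  have h1 := (h.parallelCurve_comp hpos).hasDerivAt_unitTangent s
  have h2 := ((h.hasDerivAt_unitTangent (σ * s)).scomp s hσ).neg
  rw [funext (h.unitTangent_parallelCurve hpos)] at h1
  have e := congrArg (dot3 (unitNormal (fun t => parallelCurve γ θ (σ * t)) s)) (h1.unique h2)
  rw [h.norm3_deriv_parallelCurve hpos, h.unitNormal_parallelCurve hpos] at e
  have hγ := h.sphere (σ * s)
  have hγn := dot3_cross3_self_left (γ (σ * s)) (unitTangent γ (σ * s))
  have hn := dot3_cross3_cross3 hγ (h.dot3_unitTangent_self (σ * s)) (h.dot3_unitTangent (σ * s))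
  rw [← unitNormal_eq] at hγn hn
  have hσ0 : σ ≠ 0 := left_ne_zero_of_mul (hpos s).ne'
  have hD := right_ne_zero_of_mul (hpos (σ * s)).ne'
  have hu := (h.speed_pos (σ * s)).ne'
  rw [eq_div_iff hD]
  refine mul_left_cancel₀ hu (mul_left_cancel₀ hσ0 ?_)
  generalize kappa (fun t => parallelCurve γ θ (σ * t)) s = k at *
  simp only [dot3, parallelCurve, Pi.add_apply, Pi.sub_apply, Pi.neg_apply, Pi.smul_apply,
    smul_eq_mul] at e hγ hγn hn
  generalize norm3 (deriv γ (σ * s)) = u at *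
  generalize kappa γ (σ * s) = κ at *
  have hcs := Real.sin_sq_add_cos_sq θ
  generalize Real.sin θ = S at *
  generalize Real.cos θ = C at *
  linear_combination e
    - u * σ * (κ * S - C) * k * (S ^ 2 * hγ - 2 * S * C * hγn + C ^ 2 * hn + hcs)
    + u * σ * (κ * S - C) * (S * C * hγ + (S ^ 2 - C ^ 2) * hγn - S * C * hn)
    + σ * u * (S * hγ + C * κ * hn - (S * κ + C) * hγn)

end Parallel

end IsRegularCurve

/-! ### Lifts of parallel curves -/

/-- The element of `SU(2)` acting as the half-turn about `cos (θ/2) e₃ + sin (θ/2) e₂`. -/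
def halfTurn (θ : ℝ) : Mat2 :=
  (Real.cos (θ / 2) : ℂ) • E3 + (Real.sin (θ / 2) : ℂ) • E2

lemma halfTurn_mem (θ : ℝ) : halfTurn θ ∈ Matrix.specialUnitaryGroup (Fin 2) ℂ := by
  have h : (Real.sin (θ / 2) : ℂ) ^ 2 + (Real.cos (θ / 2) : ℂ) ^ 2 = 1 :=
    mod_cast Real.sin_sq_add_cos_sq _
  rw [Matrix.mem_specialUnitaryGroup_iff, Matrix.mem_unitaryGroup_iff, halfTurn]
  generalize Real.sin (θ / 2) = p at *
  generalize Real.cos (θ / 2) = q at *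
  constructor
  · ext i j
    fin_cases i <;> fin_cases j <;>
      simp [E2, E3, Matrix.mul_apply, Fin.sum_univ_two, Matrix.star_apply] <;>
      grind [Complex.I_sq]
  · simp [E2, E3, Matrix.det_fin_two]
    grind [Complex.I_sq]

lemma isUnit_det_of_mem {a : Mat2} (ha : a ∈ Matrix.specialUnitaryGroup (Fin 2) ℂ) :
    IsUnit a.det := by
  rw [(Matrix.mem_specialUnitaryGroup_iff.1 ha).2]; exact isUnit_one

lemma inv_mem {a : Mat2} (ha : a ∈ Matrix.specialUnitaryGroup (Fin 2) ℂ) :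
    a⁻¹ ∈ Matrix.specialUnitaryGroup (Fin 2) ℂ := by
  obtain ⟨h1, h2⟩ := Matrix.mem_specialUnitaryGroup_iff.1 ha
  rw [Matrix.inv_eq_right_inv (Matrix.mem_unitaryGroup_iff.1 h1)]
  refine Matrix.mem_specialUnitaryGroup_iff.2 ⟨Unitary.star_mem h1, ?_⟩
  rw [Matrix.star_eq_conjTranspose, Matrix.det_conjTranspose, h2, star_one]

lemma AdM_mul (a b x : Mat2) : AdM (a * b) x = AdM a (AdM b x) := by
  simp only [AdM, Matrix.mul_inv_rev, Matrix.mul_assoc]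

lemma AdM_eq_of_mul_eq {a x y : Mat2} (ha : a ∈ Matrix.specialUnitaryGroup (Fin 2) ℂ)
    (h : a * x = y * a) : AdM a x = y := by
  rw [AdM, h, Matrix.mul_assoc, Matrix.mul_nonsing_inv _ (isUnit_det_of_mem ha), Matrix.mul_one]

lemma AdM_halfTurn_E3 (θ : ℝ) :
    AdM (halfTurn θ) E3 = (Real.cos θ : ℂ) • E3 + (Real.sin θ : ℂ) • E2 := by
  refine AdM_eq_of_mul_eq (halfTurn_mem θ) ?_
  have h := Real.sin_sq_add_cos_sq (θ / 2)
  have hc : Real.cos θ = 2 * Real.cos (θ / 2) ^ 2 - 1 := by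
    rw [← Real.cos_two_mul]; congr 1; ring
  have hs : Real.sin θ = 2 * Real.sin (θ / 2) * Real.cos (θ / 2) := by
    rw [← Real.sin_two_mul]; congr 1; ring
  rw [hc, hs, halfTurn]
  generalize Real.sin (θ / 2) = p at *
  generalize Real.cos (θ / 2) = q at *
  have h' : (p : ℂ) ^ 2 + (q : ℂ) ^ 2 = 1 := mod_cast h
  ext i j
  fin_cases i <;> fin_cases j <;>
    simp [E2, E3, Matrix.mul_apply, Fin.sum_univ_two] <;> grind [Complex.I_sq]

lemma AdM_halfTurn_E1 (θ : ℝ) : AdM (halfTurn θ) E1 = -E1 := by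
  refine AdM_eq_of_mul_eq (halfTurn_mem θ) ?_
  ext i j
  fin_cases i <;> fin_cases j <;>
    simp [halfTurn, E1, E2, E3, Matrix.mul_apply, Fin.sum_univ_two] <;> ring

lemma E3_mul_E1 : E3 * E1 = E2 := by
  ext i j
  fin_cases i <;> fin_cases j <;> simp [E1, E2, E3, Matrix.mul_apply, Fin.sum_univ_two]

lemma toSu2_mul_of_orthogonal {v w : R3} (h : dot3 v w = 0) :
    toSu2 v * toSu2 w = toSu2 (cross3 v w) := by
  have h' : (v 0 : ℂ) * w 0 + v 1 * w 1 + v 2 * w 2 = 0 := by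
    unfold dot3 at h; exact_mod_cast h
  ext i j
  fin_cases i <;> fin_cases j <;>
    simp [toSu2, cross3, E1, E2, E3, Matrix.mul_apply, Fin.sum_univ_two] <;>
    grind [Complex.I_sq]

lemma toSu2_add (v w : R3) : toSu2 (v + w) = toSu2 v + toSu2 w := by
  simp only [toSu2, Pi.add_apply, Complex.ofReal_add]; module

lemma toSu2_smul (r : ℝ) (v : R3) : toSu2 (r • v) = (r : ℂ) • toSu2 v := by
  simp only [toSu2, Pi.smul_apply, smul_eq_mul, Complex.ofReal_mul]; module

namespace IsLift

variable {γ : ℝ → R3} {c : ℝ → Mat2}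

lemma ad2 (hc : IsLift γ c) (h : IsRegularCurve γ) (s : ℝ) :
    AdM (c s) E2 = toSu2 (unitNormal γ s) := by
  rw [IsRegularCurve.unitNormal_eq, ← toSu2_mul_of_orthogonal (h.dot3_unitTangent s), unitTangent,
    ← hc.ad1, ← hc.ad3, ← E3_mul_E1]
  simp only [AdM, Matrix.mul_assoc]
  rw [Matrix.nonsing_inv_mul_cancel_left _ _ (isUnit_det_of_mem (hc.mem s))]

lemma parallelCurve_comp {θ σ : ℝ} (hc : IsLift γ c) (h : IsRegularCurve γ)
    (hpos : ∀ s, 0 < σ * (kappa γ s * Real.sin θ - Real.cos θ)) :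
    IsLift (fun t => parallelCurve γ θ (σ * t)) fun t => c (σ * t) * halfTurn θ where
  mem s := mul_mem (hc.mem _) (halfTurn_mem θ)
  smooth i j := by
    have hsm (k : Fin 2) : ContDiff ℝ (⊤ : ℕ∞) fun s => c (σ * s) i k :=
      (hc.smooth i k).comp (contDiff_const.mul contDiff_id)
    simp only [Matrix.mul_apply]
    exact ContDiff.sum fun k _ => (hsm k).mul contDiff_const
  ad3 s := by
    rw [AdM_mul, AdM_halfTurn_E3, parallelCurve, toSu2_add, toSu2_smul, toSu2_smul, ← hc.ad3,
      ← hc.ad2 h]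
    simp only [AdM, Matrix.mul_add, Matrix.add_mul, Matrix.mul_smul, Matrix.smul_mul]
  ad1 s := by
    have e := h.unitTangent_parallelCurve hpos s
    rw [unitTangent] at e
    rw [AdM_mul, AdM_halfTurn_E1, e, ← neg_one_smul ℝ (unitTangent _ _), toSu2_smul, unitTangent, ← hc.ad1]
    simp [AdM]

end IsLift

lemma fmap_mul_right (c1 c2 : ℝ → Mat2) {b : Mat2} (hb : IsUnit b.det) (r1 r2 s1 s2 : ℝ) :
    fmap (fun t => c1 (r1 * t) * b) (fun t => c2 (r2 * t) * b) s1 s2 =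
      b⁻¹ * fmap c1 c2 (r1 * s1) (r2 * s2) * b⁻¹⁻¹ := by
  simp only [fmap, Matrix.mul_inv_rev, Matrix.mul_assoc, mul_zero,
    Matrix.nonsing_inv_nonsing_inv b hb, Matrix.mul_nonsing_inv_cancel_left _ _ hb]

namespace IsRegularCurve

variable {γ : ℝ → R3} {θ σ : ℝ}

lemma param_parallelCurve (h : IsRegularCurve γ)
    (hpos : ∀ s, 0 < σ * (kappa γ s * Real.sin θ - Real.cos θ)) (hσ : σ ^ 2 = 1)
    (hparam : ∀ s, norm3 (deriv γ s) ^ 2 * (1 + kappa γ s ^ 2) = 4) (s : ℝ) :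
    norm3 (deriv (fun t => parallelCurve γ θ (σ * t)) s) ^ 2 *
      (1 + kappa (fun t => parallelCurve γ θ (σ * t)) s ^ 2) = 4 := by
  have hD := right_ne_zero_of_mul (hpos (σ * s)).ne'
  have hcs := Real.sin_sq_add_cos_sq θ
  have hp := hparam (σ * s)
  rw [h.norm3_deriv_parallelCurve hpos, h.kappa_parallelCurve hpos]
  generalize norm3 (deriv γ (σ * s)) = u at *
  generalize kappa γ (σ * s) = κ at *
  have e : (1 + ((Real.sin θ + κ * Real.cos θ) / (κ * Real.sin θ - Real.cos θ)) ^ 2) *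
      (κ * Real.sin θ - Real.cos θ) ^ 2 = 1 + κ ^ 2 := by
    rw [div_pow, add_mul, div_mul_cancel₀ _ (pow_ne_zero 2 hD)]
    linear_combination (1 + κ ^ 2) * hcs
  linear_combination u ^ 2 * σ ^ 2 * e + u ^ 2 * (1 + κ ^ 2) * hσ + hp

lemma kappa_parallelCurve_sub_cot (h : IsRegularCurve γ)
    (hpos : ∀ s, 0 < σ * (kappa γ s * Real.sin θ - Real.cos θ)) (hθ : 0 < Real.sin θ) (s : ℝ) :
    kappa (fun t => parallelCurve γ θ (σ * t)) s - Real.cot θ =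
      1 / (Real.sin θ * (kappa γ (σ * s) * Real.sin θ - Real.cos θ)) := by
  have hD := right_ne_zero_of_mul (hpos (σ * s)).ne'
  rw [h.kappa_parallelCurve hpos, Real.cot_eq_cos_div_sin, div_sub_div _ _ hD hθ.ne',
    mul_comm (Real.sin θ) (_ - _)]
  congr 1
  linear_combination Real.sin_sq_add_cos_sq θ

end IsRegularCurve

lemma meanCurvature_rotate {S C κ₁ κ₂ : ℝ} (hSC : S ^ 2 + C ^ 2 = 1) (h1 : κ₁ * S - C ≠ 0)
    (h2 : κ₂ * S - C ≠ 0) :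
    (1 + (S + κ₁ * C) / (κ₁ * S - C) * ((S + κ₂ * C) / (κ₂ * S - C))) /
        ((S + κ₁ * C) / (κ₁ * S - C) - (S + κ₂ * C) / (κ₂ * S - C)) =
      -((1 + κ₁ * κ₂) / (κ₁ - κ₂)) := by
  have hn : 1 + (S + κ₁ * C) / (κ₁ * S - C) * ((S + κ₂ * C) / (κ₂ * S - C)) =
      (1 + κ₁ * κ₂) / ((κ₁ * S - C) * (κ₂ * S - C)) := by
    rw [div_mul_div_comm, one_add_div (mul_ne_zero h1 h2)]
    congr 1
    linear_combination (1 + κ₁ * κ₂) * hSC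
  have hd : (S + κ₁ * C) / (κ₁ * S - C) - (S + κ₂ * C) / (κ₂ * S - C) =
      -(κ₁ - κ₂) / ((κ₁ * S - C) * (κ₂ * S - C)) := by
    rw [div_sub_div _ _ h1 h2]
    congr 1
    linear_combination (κ₂ - κ₁) * hSC
  rw [hn, hd, div_div_div_cancel_right₀ (mul_ne_zero h1 h2), div_neg]

theorem stmt17 (γ1 γ2 : ℝ → R3) (θ : ℝ) (c1 c2 : ℝ → Mat2)
    (h : IsAdmissiblePair γ1 γ2) (hc1 : IsLift γ1 c1) (hc2 : IsLift γ2 c2)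
    (hθ : 0 < θ ∧ θ < Real.pi)
    (hcot : ∀ s1 s2 : ℝ, kappa γ2 s2 < Real.cot θ ∧ Real.cot θ < kappa γ1 s1) :
    IsAdmissiblePair (parallelCurve γ1 θ) (fun s => parallelCurve γ2 θ (-s)) ∧
    (∀ s1 s2 : ℝ, kappa (fun s => parallelCurve γ2 θ (-s)) s2 < Real.cot θ ∧
      Real.cot θ < kappa (parallelCurve γ1 θ) s1) ∧
    (∃ d1 d2 : ℝ → Mat2,
      IsLift (parallelCurve γ1 θ) d1 ∧ IsLift (fun s => parallelCurve γ2 θ (-s)) d2 ∧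
      ∃ a ∈ Matrix.specialUnitaryGroup (Fin 2) ℂ,
        ∀ s1 s2 : ℝ, fmap d1 d2 s1 s2 = a * fmap c1 c2 s1 (-s2) * a⁻¹) ∧
    ∀ s1 s2 : ℝ,
      (1 + kappa (parallelCurve γ1 θ) s1 * kappa (fun s => parallelCurve γ2 θ (-s)) s2) /
          (kappa (parallelCurve γ1 θ) s1 - kappa (fun s => parallelCurve γ2 θ (-s)) s2) =
        -((1 + kappa γ1 s1 * kappa γ2 (-s2)) / (kappa γ1 s1 - kappa γ2 (-s2))) := by
  have hS := Real.sin_pos_of_pos_of_lt_pi hθ.1 hθ.2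
  rw [Real.cot_eq_cos_div_sin] at hcot
  have p1 (s : ℝ) : 0 < 1 * (kappa γ1 s * Real.sin θ - Real.cos θ) := by
    linarith [(div_lt_iff₀ hS).1 (hcot s s).2]
  have p2 (s : ℝ) : 0 < -1 * (kappa γ2 s * Real.sin θ - Real.cos θ) := by
    linarith [(lt_div_iff₀ hS).1 (hcot s s).1]
  have q1 : (fun s => parallelCurve γ1 θ (1 * s)) = parallelCurve γ1 θ := by simp
  have q2 : (fun s => parallelCurve γ2 θ (-1 * s)) = fun s => parallelCurve γ2 θ (-s) := by simp
  rw [← q1, ← q2]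
  have hk (s1 s2 : ℝ) : kappa (fun s => parallelCurve γ2 θ (-1 * s)) s2 < Real.cot θ ∧
      Real.cot θ < kappa (fun s => parallelCurve γ1 θ (1 * s)) s1 := by
    constructor
    · rw [← sub_neg, h.reg2.kappa_parallelCurve_sub_cot p2 hS]
      exact one_div_neg.2 (mul_neg_of_pos_of_neg hS (by linarith [p2 (-1 * s2)]))
    · rw [← sub_pos, h.reg1.kappa_parallelCurve_sub_cot p1 hS]
      exact one_div_pos.2 (mul_pos hS (by linarith [p1 (1 * s1)]))
  refine ⟨⟨h.reg1.parallelCurve_comp p1, h.reg2.parallelCurve_comp p2,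
    h.reg1.param_parallelCurve p1 (by norm_num) h.param1,
    h.reg2.param_parallelCurve p2 (by norm_num) h.param2,
    fun s1 s2 => (hk s1 s2).1.trans (hk s1 s2).2⟩, hk,
    ⟨_, _, hc1.parallelCurve_comp h.reg1 p1, hc2.parallelCurve_comp h.reg2 p2, (halfTurn θ)⁻¹,
      inv_mem (halfTurn_mem θ), fun s1 s2 => ?_⟩, fun s1 s2 => ?_⟩
  · rw [fmap_mul_right c1 c2 (isUnit_det_of_mem (halfTurn_mem θ)), one_mul, neg_one_mul]
  · rw [h.reg1.kappa_parallelCurve p1, h.reg2.kappa_parallelCurve p2,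
      meanCurvature_rotate (Real.sin_sq_add_cos_sq θ) (right_ne_zero_of_mul (p1 _).ne')
        (right_ne_zero_of_mul (p2 _).ne'), one_mul, neg_one_mul]
end
end
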